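/- For every integer k ≥ 3, Euler's totient function satisfies φ(k) ≥ k / (1.7811·log log k + 2.51/(log log k)). -/

import Mathlib

section
open Finset MeasureTheory

/-- weighted sum `∑_{k ≤ x} c k (1/k - 1/x)` -/
noncomputable def VV (c : ℕ → ℝ) (x : ℝ) : ℝ := ∑ k ∈ Icc 0 ⌊x⌋₊, c k * (1 / (k:ℝ) - 1 / x)

lemma VV_sub (c : ℕ → ℝ) {x z : ℝ} (hx : 1 ≤ x) (hz : x ≤ z) :
    VV c z - VV c x = ∫ t in x..z, (1 / t ^ 2) * ∑ k ∈ Icc 0 ⌊t⌋₊, c k := by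
  have hpos : ∀ t ∈ Set.Icc x z, t ≠ 0 := fun t ht => by have := ht.1; intro h; linarith
  have hd : ∀ t : ℝ, t ≠ 0 → deriv (fun t : ℝ => 1 / t) t = - (1 / t ^ 2) := by
    intro t ht
    simp
  have h := sum_mul_eq_sub_sub_integral_mul (f := fun t : ℝ => 1 / t) c (a := x) (b := z)
    (by linarith) hz (fun t ht => by
      have := hpos t ht
      fun_prop (disch := assumption)) (by
      apply ContinuousOn.integrableOn_Icc
      apply ContinuousOn.congr (f := fun t : ℝ => - (1 / t ^ 2))
      · apply ContinuousOn.neg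
        apply ContinuousOn.div continuousOn_const (by fun_prop)
        intro t ht; exact pow_ne_zero _ (hpos t ht)
      · intro t ht; exact hd t (hpos t ht))
  rw [intervalIntegral.integral_of_le hz]
  have h2 : ∫ t in Set.Ioc x z, deriv (fun t : ℝ => 1 / t) t * ∑ k ∈ Icc 0 ⌊t⌋₊, c k =
      - ∫ t in Set.Ioc x z, (1 / t ^ 2) * ∑ k ∈ Icc 0 ⌊t⌋₊, c k := by
    rw [← integral_neg]
    apply setIntegral_congr_fun measurableSet_Ioc
    intro t ht
    simp only
    rw [hd t (hpos t ⟨ht.1.le, ht.2⟩)]; ring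
  rw [h2] at h
  have h3 : ∑ k ∈ Icc 0 ⌊z⌋₊, c k / (k:ℝ) = ∑ k ∈ Icc 0 ⌊x⌋₊, c k / (k:ℝ) +
      ∑ k ∈ Ioc ⌊x⌋₊ ⌊z⌋₊, 1 / (k:ℝ) * c k := by
    have hdis : Disjoint (Icc 0 ⌊x⌋₊) (Ioc ⌊x⌋₊ ⌊z⌋₊) := by
      rw [Finset.disjoint_left]; intro a ha hb; simp at ha hb; omega
    have hun : Icc 0 ⌊z⌋₊ = Icc 0 ⌊x⌋₊ ∪ Ioc ⌊x⌋₊ ⌊z⌋₊ := by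
      have := Nat.floor_le_floor hz
      ext a; simp; omega
    rw [hun, sum_union hdis]
    congr 1
    apply sum_congr rfl; intros; ring
  have h4 : ∀ y : ℝ, VV c y = ∑ k ∈ Icc 0 ⌊y⌋₊, c k / (k:ℝ) - 1 / y * ∑ k ∈ Icc 0 ⌊y⌋₊, c k := by
    intro y
    unfold VV
    rw [mul_sum, ← sum_sub_distrib]
    apply sum_congr rfl; intros; ring
  rw [h4, h4, h3, h]; ring

lemma intble (c : ℕ → ℝ) {g : ℝ → ℝ} {x z : ℝ} (hx : 0 ≤ x) (hz : x ≤ z)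
    (hg : ContinuousOn g (Set.Icc x z)) :
    IntervalIntegrable (fun t => g t * ∑ k ∈ Icc 0 ⌊t⌋₊, c k) volume x z := by
  rw [intervalIntegrable_iff_integrableOn_Icc_of_le hz]
  exact integrableOn_mul_sum_Icc c hx hg.integrableOn_Icc

lemma log_fact_lb (n : ℕ) (hn : 1 ≤ n) : (n:ℝ) * Real.log n - n + 1 ≤ Real.log (n.factorial) := by
  induction n, hn using Nat.le_induction with
  | base => simp
  | succ n hn ih =>
    have hn' : (0:ℝ) < n := by exact_mod_cast hn
    rw [Nat.factorial_succ]
    push_cast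
    rw [Real.log_mul (by positivity) (by positivity)]
    have h1 : Real.log (n+1) ≤ Real.log n + 1 / n := by
      have := Real.log_le_sub_one_of_pos (x := (n+1)/(n:ℝ)) (by positivity)
      rw [Real.log_div (by positivity) (by positivity)] at this
      have e : (n+1)/(n:ℝ) - 1 = 1/n := by field_simp; ring
      linarith
    have : (n:ℝ) * Real.log (n+1) ≤ n * Real.log n + 1 := by
      calc (n:ℝ) * Real.log (n+1) ≤ n * (Real.log n + 1/n) := by gcongr
        _ = _ := by field_simp
    nlinarith

lemma log_fact_ub (n : ℕ) (hn : 1 ≤ n) : Real.log (n.factorial) ≤ (n:ℝ) * Real.log n - n + 1 + Real.log n := by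
  induction n, hn using Nat.le_induction with
  | base => simp
  | succ n hn ih =>
    have hn' : (0:ℝ) < n := by exact_mod_cast hn
    rw [Nat.factorial_succ]
    push_cast
    rw [Real.log_mul (by positivity) (by positivity)]
    have h1 : Real.log n ≤ Real.log (n+1) - 1 / (n+1) := by
      have := Real.log_le_sub_one_of_pos (x := n/(n+1:ℝ)) (by positivity)
      rw [Real.log_div (by positivity) (by positivity)] at this
      have e : n/(n+1:ℝ) - 1 = -(1/(n+1)) := by field_simp; ring
      linarith
    have : (n+1:ℝ) * Real.log n ≤ (n+1) * Real.log (n+1) - 1 := by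
      calc (n+1:ℝ) * Real.log n ≤ (n+1) * (Real.log (n+1) - 1/(n+1)) := by gcongr
        _ = _ := by field_simp
    nlinarith

lemma sum_log_eq (n : ℕ) : ∑ k ∈ Icc 0 n, Real.log k = Real.log n.factorial := by
  induction n with
  | zero => simp
  | succ n ih =>
    rw [Finset.sum_Icc_succ_top (by omega), ih, Nat.factorial_succ]
    push_cast
    rw [Real.log_mul (by positivity) (by positivity)]; ring

lemma xlogx_mono {a b : ℝ} (ha : 1 ≤ a) (hab : a ≤ b) : a * Real.log a - a ≤ b * Real.log b - b := by
  have h1 : Real.log a ≤ Real.log b := Real.log_le_log (by linarith) hab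
  have h0 : 0 ≤ Real.log a := Real.log_nonneg ha
  have := Real.log_le_sub_one_of_pos (x := a/b) (by apply div_pos <;> linarith)
  rw [Real.log_div (by linarith) (by linarith)] at this
  have hb : 0 < b := by linarith
  have h3 : b * (Real.log a - Real.log b) ≤ a - b := by
    calc b * (Real.log a - Real.log b) ≤ b * (a/b - 1) := by gcongr
      _ = a - b := by field_simp
  nlinarith

lemma T_bound {u : ℝ} (hu : 1 ≤ u) :
    |∑ k ∈ Icc 0 ⌊u⌋₊, Real.log k - (u * Real.log u - u)| ≤ Real.log u + 1 := by
  rw [sum_log_eq]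
  set n := ⌊u⌋₊ with hn
  have hn1 : 1 ≤ n := (Nat.one_le_floor_iff _).mpr hu
  have hnu : (n:ℝ) ≤ u := Nat.floor_le (by linarith)
  have hun : u ≤ n + 1 := (Nat.lt_floor_add_one u).le
  have hn1' : (1:ℝ) ≤ n := by exact_mod_cast hn1
  have a1 := log_fact_ub n hn1
  have a2 := log_fact_lb (n+1) (by omega)
  rw [Nat.factorial_succ] at a2
  push_cast at a2
  rw [Real.log_mul (by positivity) (by positivity)] at a2
  have b1 := xlogx_mono hn1' hnu
  have b2 := xlogx_mono hu hun
  have c1 : Real.log n ≤ Real.log u := Real.log_le_log (by linarith) hnu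
  have c2 : Real.log (n+1) ≤ Real.log u + 1 := by
    have : Real.log (n+1) ≤ Real.log (2 * u) := Real.log_le_log (by linarith) (by linarith)
    rw [Real.log_mul (by norm_num) (by linarith)] at this
    have := Real.log_two_lt_d9
    linarith
  rw [abs_le]; constructor <;> linarith

/-- Comparison of `V` with its main term. -/
lemma VV_log_diff {x z : ℝ} (hx : 1 ≤ x) (hz : x ≤ z) :
    |VV (fun k => Real.log k) z - VV (fun k => Real.log k) x -
      ((Real.log z ^ 2 / 2 - Real.log z) - (Real.log x ^ 2 / 2 - Real.log x))| ≤
      (Real.log x + 2) / x := by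
  rw [VV_sub _ hx hz]
  have hpos : ∀ t ∈ Set.Icc x z, 0 < t := fun t ht => by have := ht.1; linarith
  have hpos' : ∀ t ∈ Set.uIcc x z, 0 < t := fun t ht => by
    rw [Set.uIcc_of_le hz] at ht; exact hpos t ht
  have c1 : ContinuousOn (fun t : ℝ => (1/t^2) * (t * Real.log t - t)) (Set.Icc x z) := by
    intro t ht
    have := (hpos t ht).ne'
    apply ContinuousAt.continuousWithinAt
    fun_prop (disch := simp [this])
  have c2 : ContinuousOn (fun t : ℝ => (1/t^2) * (Real.log t + 1)) (Set.Icc x z) := by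
    intro t ht
    have := (hpos t ht).ne'
    apply ContinuousAt.continuousWithinAt
    fun_prop (disch := simp [this])
  have e1 : ∫ t in x..z, (1/t^2) * (t * Real.log t - t) =
      (Real.log z ^ 2 / 2 - Real.log z) - (Real.log x ^ 2 / 2 - Real.log x) := by
    rw [intervalIntegral.integral_eq_sub_of_hasDerivAt (f := fun t => Real.log t ^ 2 / 2 - Real.log t)]
    · intro t ht
      have h0 := (hpos' t ht).ne'
      have := (((Real.hasDerivAt_log h0).pow 2).div_const 2).sub (Real.hasDerivAt_log h0)
      refine HasDerivAt.congr_deriv this ?_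
      simp
      field_simp
    · apply ContinuousOn.intervalIntegrable; rwa [Set.uIcc_of_le hz]
  have e2 : ∫ t in x..z, (1/t^2) * (Real.log t + 1) =
      (Real.log x + 2) / x - (Real.log z + 2) / z := by
    rw [intervalIntegral.integral_eq_sub_of_hasDerivAt (f := fun t => -((Real.log t + 2) / t))]
    · ring
    · intro t ht
      have h0 := (hpos' t ht).ne'
      have := (((Real.hasDerivAt_log h0).add_const 2).div (hasDerivAt_id t) h0).neg
      refine HasDerivAt.congr_deriv this ?_
      simp
      field_simp
      ring
    · apply ContinuousOn.intervalIntegrable; rwa [Set.uIcc_of_le hz]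
  have cz : ContinuousOn (fun t : ℝ => (1/t^2)) (Set.Icc x z) := by
    intro t ht
    have := (hpos t ht).ne'
    apply ContinuousAt.continuousWithinAt
    fun_prop (disch := simp [this])
  have i1 := intble (fun k => Real.log k) (by linarith) hz cz
  have i2 : IntervalIntegrable (fun t : ℝ => (1/t^2) * (t * Real.log t - t)) volume x z := by
    apply ContinuousOn.intervalIntegrable; rwa [Set.uIcc_of_le hz]
  rw [← e1, ← intervalIntegral.integral_sub i1 i2]
  have h5 := intervalIntegral.norm_integral_le_of_norm_le (μ := volume) (a := x) (b := z)
    (f := fun t : ℝ => (1/t^2) * (∑ k ∈ Icc 0 ⌊t⌋₊, Real.log k) - (1/t^2) * (t * Real.log t - t))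
    (g := fun t : ℝ => (1/t^2) * (Real.log t + 1)) hz ?_ ?_
  · rw [e2] at h5
    rw [Real.norm_eq_abs] at h5
    refine h5.trans ?_
    have : 0 ≤ (Real.log z + 2) / z := by
      apply div_nonneg _ (by linarith)
      have := Real.log_nonneg (hx.trans hz)
      linarith
    linarith
  · refine Filter.Eventually.of_forall (fun t ht => ?_)
    rw [← mul_sub, norm_mul, Real.norm_eq_abs, Real.norm_eq_abs, abs_of_nonneg (by positivity)]
    gcongr
    exact T_bound (by linarith [ht.1])
  · apply ContinuousOn.intervalIntegrable; rwa [Set.uIcc_of_le hz]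

end

section
open Finset MeasureTheory

lemma hyper (N : ℕ) (f h : ℕ → ℝ) :
    ∑ k ∈ Ioc 0 N, (∑ d ∈ k.divisors, f d) * h k =
      ∑ n ∈ Ioc 0 N, f n * ∑ m ∈ Ioc 0 (N / n), h (n * m) := by
  have h1 : ∀ k ∈ Ioc 0 N, (∑ d ∈ k.divisors, f d) * h k =
      ∑ n ∈ Ioc 0 N, if n ∣ k then f n * h k else 0 := by
    intro k hk
    rw [mem_Ioc] at hk
    rw [sum_mul, ← sum_filter]
    apply sum_congr _ (fun _ _ => rfl)
    ext n
    simp only [Nat.mem_divisors, mem_filter, mem_Ioc]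
    constructor
    · rintro ⟨a, b⟩
      exact ⟨⟨Nat.pos_of_dvd_of_pos a hk.1, (Nat.le_of_dvd hk.1 a).trans hk.2⟩, a⟩
    · rintro ⟨a, b⟩
      exact ⟨b, by omega⟩
  rw [sum_congr rfl h1, sum_comm]
  apply sum_congr rfl
  intro n hn
  rw [mem_Ioc] at hn
  rw [← sum_filter, mul_sum]
  symm
  apply sum_bij (fun m _ => n * m)
  · intro m hm
    simp only [mem_Ioc, mem_filter] at hm ⊢
    refine ⟨⟨Nat.mul_pos hn.1 hm.1, ?_⟩, Dvd.intro m rfl⟩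
    have := (Nat.le_div_iff_mul_le hn.1).mp hm.2
    linarith
  · intro a _ b _ hab
    exact Nat.eq_of_mul_eq_mul_left hn.1 hab
  · intro k hk
    simp only [mem_Ioc, mem_filter] at hk
    obtain ⟨⟨k1, k2⟩, m, rfl⟩ := hk
    refine ⟨m, ?_, rfl⟩
    rw [mem_Ioc]
    refine ⟨Nat.pos_of_mul_pos_left k1, ?_⟩
    rw [Nat.le_div_iff_mul_le hn.1]; linarith
  · intros; rfl

/-- `∑_{k ≤ t} c k (t/k - 1)` -/
noncomputable def WW (c : ℕ → ℝ) (t : ℝ) : ℝ := ∑ k ∈ Ioc 0 ⌊t⌋₊, c k * (t / (k:ℝ) - 1)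

noncomputable def Phi (t : ℝ) : ℝ := WW (fun _ => 1) t

lemma Phi_zero {t : ℝ} (ht : t < 1) : Phi t = 0 := by
  unfold Phi WW
  rw [Nat.floor_eq_zero.mpr ht]; simp

lemma WW_conv (f : ℕ → ℝ) (t : ℝ) :
    WW (fun k => ∑ d ∈ k.divisors, f d) t = ∑ n ∈ Ioc 0 ⌊t⌋₊, f n * Phi (t / n) := by
  unfold WW
  rw [hyper]
  apply sum_congr rfl
  intro n hn
  unfold Phi WW
  rw [Nat.floor_div_natCast]
  congr 1
  apply sum_congr rfl
  intro m hm
  push_cast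
  rw [one_mul, div_div]

lemma WW_eq (c : ℕ → ℝ) (hc : c 0 = 0) {t : ℝ} (ht : 1 ≤ t) : WW c t = t * VV c t := by
  unfold WW VV
  have : Icc 0 ⌊t⌋₊ = insert 0 (Ioc 0 ⌊t⌋₊) := by
    ext a; simp only [mem_Icc, mem_insert, mem_Ioc]; omega
  rw [this, sum_insert (by simp), hc, zero_mul, zero_add, mul_sum]
  apply sum_congr rfl
  intro k hk
  field_simp

lemma WW_log (t : ℝ) :
    WW (fun k => Real.log k) t = ∑ n ∈ Ioc 0 ⌊t⌋₊, ArithmeticFunction.vonMangoldt n * Phi (t / n) := by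
  rw [← WW_conv]
  unfold WW
  apply sum_congr rfl
  intro k hk
  simp only [ArithmeticFunction.vonMangoldt_sum]

lemma WW_log' (t : ℝ) (N : ℕ) (hN : ⌊t⌋₊ ≤ N) (ht : 0 ≤ t) :
    WW (fun k => Real.log k) t = ∑ n ∈ Ioc 0 N, ArithmeticFunction.vonMangoldt n * Phi (t / n) := by
  rw [WW_log]
  apply sum_subset
  · intro a; simp only [mem_Ioc]; omega
  · intro n hn hn'
    simp only [mem_Ioc] at hn hn'
    rw [Phi_zero, mul_zero]
    have : ⌊t⌋₊ < n := by omega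
    rw [Nat.floor_lt ht] at this
    rw [div_lt_one (by linarith)]; exact this

noncomputable def FF (κ : ℕ → ℝ) (t : ℝ) : ℝ := ∑ d ∈ Icc 1 20, κ d * d * Phi (t / d)

lemma key_id (κ : ℕ → ℝ) {x : ℝ} (hx : 20 ≤ x) :
    ∑ n ∈ Ioc 0 ⌊x⌋₊, ArithmeticFunction.vonMangoldt n * FF κ (x / n) =
      x * ∑ d ∈ Icc 1 20, κ d * VV (fun k => Real.log k) (x / d) := by
  unfold FF
  simp_rw [mul_sum]
  rw [sum_comm]
  apply sum_congr rfl
  intro d hd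
  rw [mem_Icc] at hd
  have hd1 : (1:ℝ) ≤ d := by exact_mod_cast hd.1
  have hd2 : (d:ℝ) ≤ 20 := by exact_mod_cast hd.2
  have e := WW_eq (fun k => Real.log k) (by simp) (t := x / d)
    (by rw [le_div_iff₀ (by linarith)]; linarith)
  have e2 := WW_log' (x/d) ⌊x⌋₊ (Nat.floor_le_floor (div_le_self (by linarith) hd1)) (by positivity)
  have e3 : x * (κ d * VV (fun k => Real.log k) (x / d)) =
      κ d * d * (x / d * VV (fun k => Real.log k) (x / d)) := by field_simp
  rw [e3, ← e, e2, mul_sum]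
  apply sum_congr rfl
  intro n hn
  rw [div_right_comm]; ring

lemma main_est (κ : ℕ → ℝ) (hκ : ∑ d ∈ Icc 1 20, κ d = 0) {x : ℝ} (hx : 20 ≤ x) :
    |∑ d ∈ Icc 1 20, κ d * VV (fun k => Real.log k) (x / d) -
      ((- ∑ d ∈ Icc 1 20, κ d * Real.log d) * (Real.log x - 1) +
        (∑ d ∈ Icc 1 20, κ d * Real.log d ^ 2) / 2)| ≤
      (∑ d ∈ Icc 1 20, |κ d| * d) * ((Real.log x + 2) / x) := by
  have hx0 : 0 < x := by linarith
  have e : ∑ d ∈ Icc 1 20, κ d * VV (fun k => Real.log k) (x / d) -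
      ((- ∑ d ∈ Icc 1 20, κ d * Real.log d) * (Real.log x - 1) +
        (∑ d ∈ Icc 1 20, κ d * Real.log d ^ 2) / 2) =
      ∑ d ∈ Icc 1 20, (-κ d) * (VV (fun k => Real.log k) x - VV (fun k => Real.log k) (x/d) -
        ((Real.log x ^ 2 / 2 - Real.log x) - (Real.log (x/d) ^ 2 / 2 - Real.log (x/d)))) := by
    have : ∀ d ∈ Icc 1 20, (-κ d) * (VV (fun k => Real.log k) x - VV (fun k => Real.log k) (x/d) -
        ((Real.log x ^ 2 / 2 - Real.log x) - (Real.log (x/d) ^ 2 / 2 - Real.log (x/d)))) =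
        κ d * VV (fun k => Real.log k) (x / d) + (κ d * Real.log d) * (Real.log x - 1)
        - κ d * Real.log d ^ 2 / 2 - κ d * VV (fun k => Real.log k) x := by
      intro d hd
      rw [mem_Icc] at hd
      have hd1 : (1:ℝ) ≤ d := by exact_mod_cast hd.1
      rw [Real.log_div (by linarith) (by linarith)]; ring
    rw [sum_congr rfl this, sum_sub_distrib, sum_sub_distrib, sum_add_distrib, ← sum_mul, ← sum_mul,
      ← sum_div, hκ]
    ring
  rw [e]
  refine (abs_sum_le_sum_abs _ _).trans ?_
  rw [sum_mul]
  apply sum_le_sum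
  intro d hd
  rw [mem_Icc] at hd
  have hd1 : (1:ℝ) ≤ d := by exact_mod_cast hd.1
  have hd2 : (d:ℝ) ≤ 20 := by exact_mod_cast hd.2
  rw [abs_mul, abs_neg, mul_assoc]
  gcongr
  have h1 : 1 ≤ x / d := by rw [le_div_iff₀ (by linarith)]; linarith
  have h2 : x / d ≤ x := div_le_self (by linarith) hd1
  refine (VV_log_diff h1 h2).trans ?_
  have : Real.log (x/d) ≤ Real.log x := Real.log_le_log (by linarith) h2
  calc (Real.log (x/d) + 2) / (x/d) ≤ (Real.log x + 2) / (x/d) := by gcongr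
    _ = _ := by field_simp

noncomputable def JJ (x : ℝ) : ℝ := VV (fun n => ArithmeticFunction.vonMangoldt n) x

lemma JJ_upper (κ : ℕ → ℝ) (hκ : ∑ d ∈ Icc 1 20, κ d = 0) (c0 : ℝ)
    (hc : c0 = - ∑ d ∈ Icc 1 20, κ d * Real.log d)
    (hF : ∀ t, 1 ≤ t → c0 * (t - 1) ≤ FF κ t) {x : ℝ} (hx : 20 ≤ x) :
    c0 * JJ x ≤ c0 * (Real.log x - 1) + (∑ d ∈ Icc 1 20, κ d * Real.log d ^ 2) / 2 +
      (∑ d ∈ Icc 1 20, |κ d| * d) * ((Real.log x + 2) / x) := by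
  have h1 := (abs_le.mp (main_est κ hκ hx)).2
  have h2 := key_id κ hx
  have h3 : c0 * WW (fun n => ArithmeticFunction.vonMangoldt n) x ≤
      ∑ n ∈ Ioc 0 ⌊x⌋₊, ArithmeticFunction.vonMangoldt n * FF κ (x / n) := by
    unfold WW
    rw [mul_sum]
    apply sum_le_sum
    intro n hn
    rw [mem_Ioc] at hn
    have hn' : (n:ℝ) ≤ x := (Nat.le_floor_iff (by linarith)).mp hn.2
    have hn0 : (0:ℝ) < n := by exact_mod_cast hn.1
    have := mul_le_mul_of_nonneg_left (hF (x/n) (by rw [le_div_iff₀ hn0]; linarith))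
      (ArithmeticFunction.vonMangoldt_nonneg (n := n))
    linarith
  rw [h2, WW_eq _ (by simp) (by linarith)] at h3
  have h4 : c0 * JJ x ≤ ∑ d ∈ Icc 1 20, κ d * VV (fun k => Real.log k) (x / d) := by
    have : x * (c0 * JJ x) ≤ x * ∑ d ∈ Icc 1 20, κ d * VV (fun k => Real.log k) (x / d) := by
      unfold JJ; linarith
    exact le_of_mul_le_mul_left this (by linarith)
  rw [← hc] at h1
  linarith

lemma JJ_lower (κ : ℕ → ℝ) (hκ : ∑ d ∈ Icc 1 20, κ d = 0) (c0 : ℝ)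
    (hc : c0 = - ∑ d ∈ Icc 1 20, κ d * Real.log d)
    (hF : ∀ t, 1 ≤ t → FF κ t ≤ c0 * (t - 1)) {x : ℝ} (hx : 20 ≤ x) :
    c0 * (Real.log x - 1) + (∑ d ∈ Icc 1 20, κ d * Real.log d ^ 2) / 2 -
      (∑ d ∈ Icc 1 20, |κ d| * d) * ((Real.log x + 2) / x) ≤ c0 * JJ x := by
  have h1 := (abs_le.mp (main_est κ hκ hx)).1
  have h2 := key_id κ hx
  have h3 : ∑ n ∈ Ioc 0 ⌊x⌋₊, ArithmeticFunction.vonMangoldt n * FF κ (x / n) ≤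
      c0 * WW (fun n => ArithmeticFunction.vonMangoldt n) x := by
    unfold WW
    rw [mul_sum]
    apply sum_le_sum
    intro n hn
    rw [mem_Ioc] at hn
    have hn' : (n:ℝ) ≤ x := (Nat.le_floor_iff (by linarith)).mp hn.2
    have hn0 : (0:ℝ) < n := by exact_mod_cast hn.1
    have := mul_le_mul_of_nonneg_left (hF (x/n) (by rw [le_div_iff₀ hn0]; linarith))
      (ArithmeticFunction.vonMangoldt_nonneg (n := n))
    linarith
  rw [h2, WW_eq _ (by simp) (by linarith)] at h3
  have h4 : ∑ d ∈ Icc 1 20, κ d * VV (fun k => Real.log k) (x / d) ≤ c0 * JJ x := by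
    have : x * ∑ d ∈ Icc 1 20, κ d * VV (fun k => Real.log k) (x / d) ≤ x * (c0 * JJ x) := by
      unfold JJ; linarith
    exact le_of_mul_le_mul_left this (by linarith)
  rw [← hc] at h1
  linarith

end

section
open Finset MeasureTheory Filter Topology

lemma harm_lb (n : ℕ) : Real.eulerMascheroniConstant + Real.log (n + 1/2) ≤ (harmonic n : ℝ) := by
  have anti : Antitone (fun n : ℕ => (harmonic n : ℝ) - Real.log (n + 1/2)) := by
    apply antitone_nat_of_succ_le
    intro n
    rw [harmonic_succ]
    push_cast
    have h := Real.le_log_one_add_of_nonneg (x := 1 / ((n:ℝ) + 1/2)) (by positivity)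
    have e : 1 + 1 / ((n:ℝ) + 1/2) = ((n:ℝ) + 1 + 1/2) / (n + 1/2) := by field_simp; ring
    rw [e, Real.log_div (by positivity) (by positivity)] at h
    have e2 : 2 * (1 / ((n:ℝ) + 1/2)) / (1 / ((n:ℝ) + 1/2) + 2) = ((n:ℝ)+1)⁻¹ := by
      field_simp; ring
    rw [e2] at h
    linarith
  have lim : Tendsto (fun n : ℕ => (harmonic n : ℝ) - Real.log (n + 1/2)) atTop
      (𝓝 Real.eulerMascheroniConstant) := by
    apply tendsto_of_tendsto_of_tendsto_of_le_of_le' Real.tendsto_harmonic_sub_log_add_one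
      Real.tendsto_harmonic_sub_log
    · filter_upwards with n
      have : Real.log (n + 1/2) ≤ Real.log (n+1) := Real.log_le_log (by positivity) (by linarith)
      linarith
    · filter_upwards [eventually_gt_atTop 0] with n hn
      have hn : (0:ℝ) < n := by exact_mod_cast hn
      have : Real.log n ≤ Real.log (n+1/2) := Real.log_le_log (by positivity) (by linarith)
      linarith
  have := anti.le_of_tendsto lim n
  linarith

lemma harm_ub (n : ℕ) (hn : 1 ≤ n) :
    (harmonic n : ℝ) ≤ Real.eulerMascheroniConstant + Real.log n + 1 / (2 * n) := by
  have mono : Monotone (fun n : ℕ => (harmonic (n+1) : ℝ) - Real.log ((n+1 : ℕ):ℝ) - 1 / (2 * ((n+1 : ℕ):ℝ))) := by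
    apply monotone_nat_of_le_succ
    intro n
    rw [harmonic_succ (n+1)]
    have hp : (0:ℝ) < n + 1 := by positivity
    have h1 : 0 ≤ Real.log (((n:ℝ)+1+1) / (n+1)) :=
      Real.log_nonneg (by rw [le_div_iff₀ hp]; linarith)
    have h := Real.self_le_sinh_iff.mpr h1
    rw [Real.sinh_log (by positivity), Real.log_div (by positivity) (by positivity)] at h
    have e : (((n:ℝ)+1+1) / (n+1) - (((n:ℝ)+1+1) / (n+1))⁻¹) / 2 =
       ((n:ℝ)+1+1)⁻¹ - 1 / (2 * (n+1+1)) + 1 / (2 * (n+1)) := by field_simp; ring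
    push_cast
    rw [e] at h
    linarith
  have lim : Tendsto (fun n : ℕ => (harmonic (n+1) : ℝ) - Real.log ((n+1 : ℕ):ℝ) - 1 / (2 * ((n+1 : ℕ):ℝ))) atTop
      (𝓝 (Real.eulerMascheroniConstant - 1/2 * 0)) := by
    have l1 := (tendsto_add_atTop_iff_nat 1).mpr Real.tendsto_harmonic_sub_log
    have l2 := (tendsto_one_div_add_atTop_nhds_zero_nat (𝕜 := ℝ)).const_mul (1/2)
    refine (l1.sub l2).congr ?_
    intro n
    push_cast
    field_simp
  obtain ⟨m, rfl⟩ : ∃ m, n = m + 1 := ⟨n-1, by omega⟩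
  have := mono.ge_of_tendsto lim m
  linarith

lemma Phi_eq (s : ℝ) : Phi s = s * (harmonic ⌊s⌋₊ : ℝ) - ⌊s⌋₊ := by
  unfold Phi WW
  rw [harmonic_eq_sum_Icc]
  push_cast
  have : Ioc 0 ⌊s⌋₊ = Icc 1 ⌊s⌋₊ := by ext; simp [Nat.succ_le_iff]
  rw [this, mul_sum]
  simp [div_eq_mul_inv]

lemma Phi_bound {s : ℝ} (hs : 1 < s) :
    |Phi s - (s * Real.log s + (Real.eulerMascheroniConstant - 1) * s + 1/2)| ≤ 1 / (2 * (s - 1)) := by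
  rw [Phi_eq]
  have hN1 : 1 ≤ ⌊s⌋₊ := (Nat.one_le_floor_iff _).mpr hs.le
  have a1 : (⌊s⌋₊:ℝ) ≤ s := Nat.floor_le (by linarith)
  have a2 : s < ⌊s⌋₊ + 1 := Nat.lt_floor_add_one s
  generalize ⌊s⌋₊ = N at *
  have lb := harm_lb N
  have ub := harm_ub N hN1
  have hN : (1:ℝ) ≤ N := by exact_mod_cast hN1
  have hs0 : 0 < s := by linarith
  have hr : 1 / (2 * (N:ℝ)) ≤ 1 / (2 * (s - 1)) := by
    apply one_div_le_one_div_of_le <;> linarith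
  rw [abs_le]
  constructor
  · have h1 := Real.log_le_sub_one_of_pos (x := s / (N + 1/2)) (by positivity)
    rw [Real.log_div (by positivity) (by positivity)] at h1
    have h2 : s * (Real.log s - Real.log (N+1/2)) ≤ s - N - 1/2 + 1 / (2 * N) := by
      calc s * (Real.log s - Real.log (N+1/2)) ≤ s * (s / (N+1/2) - 1) := by gcongr
        _ = (s - N - 1/2) + (s - N - 1/2)^2 / (N + 1/2) := by field_simp; ring
        _ ≤ (s - N - 1/2) + (1/4) / (N + 1/2) := by
            gcongr
            nlinarith
        _ ≤ (s - N - 1/2) + 1 / (2 * N) := by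
            apply add_le_add le_rfl
            rw [div_le_div_iff₀ (by positivity) (by positivity)]
            linarith
    have h3 : s * (Real.eulerMascheroniConstant + Real.log (N + 1/2)) ≤ s * (harmonic N : ℝ) := by gcongr
    linarith
  · have h1 := Real.log_le_sub_one_of_pos (x := N / s) (by positivity)
    rw [Real.log_div (by positivity) (by positivity)] at h1
    have h2 : s * (Real.log N - Real.log s) ≤ N - s := by
      calc s * (Real.log N - Real.log s) ≤ s * (N/s - 1) := by gcongr
        _ = N - s := by field_simp
    have h3 : s * (harmonic N : ℝ) ≤ s * (Real.eulerMascheroniConstant + Real.log N + 1 / (2 * N)) := by gcongr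
    have h4 : s * (1 / (2 * N)) ≤ 1/2 + 1 / (2 * N) := by
      have : s * (1 / (2 * (N:ℝ))) = s / (2 * N) := by ring
      rw [this, div_add_div _ _ (by norm_num) (by positivity), div_le_div_iff₀ (by positivity) (by positivity)]
      nlinarith
    linarith

lemma FF_large (κ : ℕ → ℝ) (hκ : ∑ d ∈ Icc 1 20, κ d = 0) {t : ℝ} (ht : 20 < t) :
    (- ∑ d ∈ Icc 1 20, κ d * Real.log d) * t + (∑ d ∈ Icc 1 20, κ d * d) / 2
     - (∑ d ∈ Icc 1 20, |κ d| * d ^ 2) / (2 * (t - 20)) ≤ FF κ t := by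
  have ht0 : 0 < t := by linarith
  have e : (- ∑ d ∈ Icc 1 20, κ d * Real.log d) * t + (∑ d ∈ Icc 1 20, κ d * d) / 2
     - (∑ d ∈ Icc 1 20, |κ d| * d ^ 2) / (2 * (t - 20)) =
     ∑ d ∈ Icc 1 20, (-(κ d * Real.log d) * t + κ d * d / 2 - |κ d| * d^2 / (2 * (t - 20))
       + κ d * (t * Real.log t + (Real.eulerMascheroniConstant - 1) * t)) := by
    rw [sum_add_distrib, ← sum_mul, hκ, sum_sub_distrib, sum_add_distrib, ← sum_mul, ← sum_div,
      ← sum_div, sum_neg_distrib]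
    ring
  rw [e]
  unfold FF
  apply sum_le_sum
  intro d hd
  rw [mem_Icc] at hd
  have hd1 : (1:ℝ) ≤ d := by exact_mod_cast hd.1
  have hd2 : (d:ℝ) ≤ 20 := by exact_mod_cast hd.2
  have hs : 1 < t / d := by rw [lt_div_iff₀ (by linarith)]; linarith
  have hb := Phi_bound hs
  rw [Real.log_div (by linarith) (by linarith)] at hb
  set r := Phi (t / d) - (t/d * (Real.log t - Real.log d) + (Real.eulerMascheroniConstant - 1) * (t/d) + 1/2) with hr
  have hb2 : |r| ≤ d / (2 * (t - 20)) := by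
    refine hb.trans ?_
    have : 1 / (2 * (t / d - 1)) = d / (2 * (t - d)) := by
      have : t - d ≠ 0 := by intro h; linarith
      have h2 : t / d - 1 = (t - d)/d := by field_simp
      rw [h2]
      field_simp
    rw [this]
    gcongr
  have e3 : κ d * d * Phi (t/d) = -(κ d * Real.log d) * t + κ d * d / 2 + κ d * (t * Real.log t + (Real.eulerMascheroniConstant - 1) * t) + κ d * d * r := by
    rw [hr]; field_simp; ring
  have h4 : |κ d * d * r| ≤ |κ d| * d ^ 2 / (2 * (t - 20)) := by
    rw [abs_mul, abs_mul, abs_of_nonneg (show (0:ℝ) ≤ d by linarith)]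
    calc |κ d| * d * |r| ≤ |κ d| * d * (d / (2 * (t - 20))) := by gcongr
      _ = _ := by ring
  have := (abs_le.mp h4).1
  rw [e3]; linarith

end

section
open Finset

def ccA : List ℤ → ℕ → ℕ → ℤ
  | [], _, _ => 0
  | a :: l, d, k => bif Nat.beq (k % d) 0 then a * (d:ℤ) + ccA l (d+1) k else ccA l (d+1) k

/-- check `Q (m-1) ≤ 10^12 (m σ(m) - C(m))` for consecutive `m`. -/
def chkF (l : List ℤ) (Q : ℤ) : ℕ → ℕ → ℤ → ℤ → Bool
  | 0, _, _, _ => true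
  | f+1, n, S, C =>
    let c := ccA l 1 n
    let S' := S + c * 1000000000000 / (n:ℤ)
    let C' := C + c
    bif decide (Q * ((n:ℤ) - 1) ≤ n * S' - 1000000000000 * C') then chkF l Q f (n+1) S' C' else false

def kUp : List ℤ := [100011, -50015, -33337, 5, -16084, 8835, -10369, 259, 4027, -786, -2308, -562, -68, 1360, -1230, 2986, -3968, 599, -1680, 2325]
/-- negative of the lower coefficients -/
def kLo : List ℤ := [-99989, 49985, 33330, 5, 19998, -9439, 2319, 2261, 2481, -4672, 2030, 0, 926, 3148, -6085, 1987, 1635, -904, 45, 939]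

lemma chkUp : chkF kUp 100002020000000000 2000 1 0 0 = true := by decide +kernel
lemma chkLo : chkF kLo (-99997730000000000) 2000 1 0 0 = true := by decide +kernel

end

section
open Finset

def kap (l : List ℤ) (d : ℕ) : ℤ := l.getD (d-1) 0

noncomputable def kapR (l : List ℤ) (d : ℕ) : ℝ := (kap l d : ℝ)

lemma ccA_eq (l : List ℤ) (d k : ℕ) :
    ccA l d k = ∑ i ∈ range l.length, if (d + i) ∣ k then l.getD i 0 * ((d + i : ℕ):ℤ) else 0 := by
  induction l generalizing d with
  | nil => simp [ccA]
  | cons a l ih =>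
    rw [ccA, List.length_cons, sum_range_succ', ih]
    have e : ∀ i, d + 1 + i = d + (i + 1) := by intro i; omega
    simp only [List.getD_cons_succ, List.getD_cons_zero, e]
    by_cases h : d ∣ k
    · have h1 : Nat.beq (k % d) 0 = true := by
        rw [Nat.beq_eq]; exact Nat.mod_eq_zero_of_dvd h
      rw [h1]; simp [h]; ring
    · have h1 : Nat.beq (k % d) 0 = false := by
        rw [Bool.eq_false_iff]; intro h'
        rw [Nat.beq_eq] at h'
        exact h (Nat.dvd_of_mod_eq_zero h')
      rw [h1]; simp [h]

lemma ccA_eq' (l : List ℤ) (hl : l.length = 20) (k : ℕ) :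
    ccA l 1 k = ∑ d ∈ Icc 1 20, if d ∣ k then kap l d * (d:ℤ) else 0 := by
  rw [ccA_eq, hl]
  have : Icc 1 20 = Ico (0+1) (20+1) := by ext; simp; omega
  rw [this, ← Finset.sum_Ico_add', ← Finset.range_eq_Ico]
  apply sum_congr rfl
  intro i _
  unfold kap
  rw [add_comm 1 i]
  simp

lemma FF_eq_WW (l : List ℤ) (hl : l.length = 20) {t : ℝ} (ht : 0 ≤ t) :
    FF (kapR l) t = WW (fun k => (ccA l 1 k : ℝ)) t := by
  have h1 : WW (fun k => (ccA l 1 k : ℝ)) t =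
      WW (fun k => ∑ d ∈ k.divisors, if d ∈ Icc 1 20 then kapR l d * d else 0) t := by
    unfold WW
    apply sum_congr rfl
    intro k hk
    rw [mem_Ioc] at hk
    congr 1
    simp only
    rw [ccA_eq' l hl]
    push_cast
    rw [← sum_filter, ← sum_filter]
    apply sum_congr _ (fun _ _ => rfl)
    ext d
    simp only [mem_filter, Nat.mem_divisors]
    have : k ≠ 0 := by omega
    tauto
  rw [h1, WW_conv]
  unfold FF
  have h2 : ∑ n ∈ Ioc 0 ⌊t⌋₊, (if n ∈ Icc 1 20 then kapR l n * n else 0) * Phi (t/n) =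
     ∑ n ∈ Ioc 0 (max ⌊t⌋₊ 20), (if n ∈ Icc 1 20 then kapR l n * n else 0) * Phi (t/n) := by
    apply sum_subset
    · intro a; simp only [mem_Ioc]; omega
    · intro n hn hn'
      simp only [mem_Ioc] at hn hn'
      rw [Phi_zero, mul_zero]
      have : ⌊t⌋₊ < n := by omega
      rw [Nat.floor_lt ht] at this
      rw [div_lt_one (by linarith)]; exact this
  rw [h2]
  have h3 : ∑ n ∈ Icc 1 20, kapR l n * n * Phi (t/n) =
      ∑ n ∈ Icc 1 20, (if n ∈ Icc 1 20 then kapR l n * n else 0) * Phi (t/n) := by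
    apply sum_congr rfl
    intro n hn; rw [if_pos hn]
  rw [h3]
  apply sum_subset
  · intro a; simp only [mem_Ioc, mem_Icc]; omega
  · intro n _ hn'
    rw [if_neg hn']; simp

noncomputable def sg (l : List ℤ) (n : ℕ) : ℝ := ∑ k ∈ Ioc 0 n, (ccA l 1 k : ℝ) / k
noncomputable def Cs (l : List ℤ) (n : ℕ) : ℝ := ∑ k ∈ Ioc 0 n, (ccA l 1 k : ℝ)

lemma WW_lin (l : List ℤ) (t : ℝ) :
    WW (fun k => (ccA l 1 k : ℝ)) t = t * sg l ⌊t⌋₊ - Cs l ⌊t⌋₊ := by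
  unfold WW sg Cs
  rw [mul_sum, ← sum_sub_distrib]
  apply sum_congr rfl
  intro k _; ring

lemma chkF_sound (l : List ℤ) (Q : ℤ) (f n : ℕ) (S C : ℤ)
    (hS : (S:ℝ) ≤ 1000000000000 * sg l n) (hC : (C:ℝ) = Cs l n) (h : chkF l Q f (n+1) S C = true) :
    ∀ m, n < m → m ≤ n + f → (Q:ℝ) * (m - 1) ≤ 1000000000000 * (m * sg l m - Cs l m) := by
  induction f generalizing n S C with
  | zero => intro m h1 h2; omega
  | succ f ih =>
    rw [chkF] at h
    simp only [Bool.cond_eq_true_distrib, Bool.cond_false_right, Bool.and_eq_true, decide_eq_true_eq] at h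
    obtain ⟨h1, h2⟩ := h
    have e1 : sg l (n+1) = sg l n + (ccA l 1 (n+1) : ℝ) / ((n+1:ℕ):ℝ) := by
      unfold sg; rw [Finset.sum_Ioc_succ_top (by omega)]
    have e2 : Cs l (n+1) = Cs l n + (ccA l 1 (n+1) : ℝ) := by
      unfold Cs; rw [Finset.sum_Ioc_succ_top (by omega)]
    have hS' : ((S + ccA l 1 (n+1) * 1000000000000 / ((n+1:ℕ):ℤ) : ℤ) : ℝ) ≤ 1000000000000 * sg l (n+1) := by
      have := Int.ediv_mul_le (ccA l 1 (n+1) * 1000000000000) (b := ((n+1:ℕ):ℤ)) (by positivity)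
      have h3 : ((ccA l 1 (n+1) * 1000000000000 / ((n+1:ℕ):ℤ) : ℤ):ℝ) * ((n+1:ℕ):ℝ) ≤ ccA l 1 (n+1) * 1000000000000 := by
        exact_mod_cast this
      rw [← le_div_iff₀ (by positivity)] at h3
      rw [e1, Int.cast_add, mul_add]
      have : (ccA l 1 (n+1) * 1000000000000 : ℝ) / ((n+1:ℕ):ℝ) = 1000000000000 * ((ccA l 1 (n+1) : ℝ) / ((n+1:ℕ):ℝ)) := by ring
      linarith
    have hC' : ((C + ccA l 1 (n+1) : ℤ) : ℝ) = Cs l (n+1) := by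
      rw [e2]; push_cast; rw [hC]
    intro m hm1 hm2
    rcases Nat.lt_or_ge (n+1) m with hm | hm
    · exact ih (n+1) _ _ hS' hC' h2 m hm (by omega)
    · have : m = n+1 := by omega
      subst this
      have h1' : (Q:ℝ) * (((n+1:ℕ):ℝ) - 1) ≤ ((n+1:ℕ):ℝ) * ((S + ccA l 1 (n+1) * 1000000000000 / ((n+1:ℕ):ℤ) : ℤ) : ℝ) - 1000000000000 * ((C + ccA l 1 (n+1) : ℤ) : ℝ) := by
        exact_mod_cast h1
      rw [hC'] at h1'
      have := mul_le_mul_of_nonneg_left hS' (show (0:ℝ) ≤ ((n+1:ℕ):ℝ) by positivity)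
      linarith

lemma FFbound (l : List ℤ) (hl : l.length = 20) (Q : ℤ) (hchk : chkF l Q 2000 1 0 0 = true) (c0 : ℝ)
    (hc : c0 = - ∑ d ∈ Icc 1 20, kapR l d * Real.log d)
    (hQ : 1000000000000 * c0 ≤ Q) (hκ : ∑ d ∈ Icc 1 20, kapR l d = 0)
    (hlarge : (∑ d ∈ Icc 1 20, |kapR l d| * d ^ 2) / 3960 ≤ c0 + (∑ d ∈ Icc 1 20, kapR l d * d) / 2)
    (t : ℝ) (ht : 1 ≤ t) : c0 * (t - 1) ≤ FF (kapR l) t := by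
  rcases le_or_gt 2000 t with h | h
  · have h1 := FF_large (kapR l) hκ (t := t) (by linarith)
    rw [← hc] at h1
    have : (∑ d ∈ Icc 1 20, |kapR l d| * (d:ℝ) ^ 2) / (2 * (t - 20)) ≤ (∑ d ∈ Icc 1 20, |kapR l d| * (d:ℝ) ^ 2) / 3960 := by
      apply div_le_div_of_nonneg_left _ (by norm_num) (by linarith)
      apply sum_nonneg; intros; positivity
    linarith
  · rw [FF_eq_WW l hl (by linarith), WW_lin]
    have hn1 : 1 ≤ ⌊t⌋₊ := (Nat.one_le_floor_iff _).mpr ht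
    have hn2 : ⌊t⌋₊ < 2000 := by rw [Nat.floor_lt (by linarith)]; exact_mod_cast h
    have a1 : (⌊t⌋₊:ℝ) ≤ t := Nat.floor_le (by linarith)
    have a2 : t < ⌊t⌋₊ + 1 := Nat.lt_floor_add_one t
    generalize ⌊t⌋₊ = n at *
    have key := chkF_sound l Q 2000 0 0 0 (by simp [sg]) (by simp [Cs]) hchk
    have k1 := key n (by omega) (by omega)
    have k2 := key (n+1) (by omega) (by omega)
    have e1 : sg l (n+1) = sg l n + (ccA l 1 (n+1) : ℝ) / ((n+1:ℕ):ℝ) := by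
      unfold sg; rw [Finset.sum_Ioc_succ_top (by omega)]
    have e2 : Cs l (n+1) = Cs l n + (ccA l 1 (n+1) : ℝ) := by
      unfold Cs; rw [Finset.sum_Ioc_succ_top (by omega)]
    have e3 : ((n+1:ℕ):ℝ) * sg l (n+1) - Cs l (n+1) = ((n+1:ℕ):ℝ) * sg l n - Cs l n := by
      rw [e1, e2]; field_simp; ring
    rw [e3] at k2
    push_cast at k2
    have k3 := mul_le_mul_of_nonneg_left k1 (show 0 ≤ n + 1 - t by linarith)
    have k4 := mul_le_mul_of_nonneg_left k2 (show 0 ≤ t - n by linarith)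
    have k5 := mul_le_mul_of_nonneg_right hQ (show 0 ≤ t - 1 by linarith)
    nlinarith

end

section
open Finset

lemma log_ratio (a b : ℝ) (hb : 0 < b) (hab : b ≤ a) :
    2 * (a - b) / (a + b) ≤ Real.log a - Real.log b ∧
      Real.log a - Real.log b ≤ (a ^ 2 - b ^ 2) / (2 * a * b) := by
  have ha : 0 < a := by linarith
  rw [← Real.log_div (by positivity) (by positivity)]
  constructor
  · have h := Real.le_log_one_add_of_nonneg (x := (a - b) / b) (div_nonneg (by linarith) hb.le)
    have e1 : 1 + (a - b) / b = a / b := by field_simp; ring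
    have e2 : 2 * ((a - b) / b) / ((a - b) / b + 2) = 2 * (a - b) / (a + b) := by
      have : (a - b) / b + 2 = (a + b) / b := by field_simp; ring
      rw [this]; field_simp
    rwa [e1, e2] at h
  · have h1 : 0 ≤ Real.log (a / b) := Real.log_nonneg (by rw [le_div_iff₀ hb]; linarith)
    have h := Real.self_le_sinh_iff.mpr h1
    rw [Real.sinh_log (by positivity)] at h
    refine h.trans (le_of_eq ?_)
    field_simp

lemma log_bd_2 : 693147179/1000000000 ≤ Real.log 2 ∧ Real.log 2 ≤ 693147183/1000000000 := by
  have h1 := Real.log_two_gt_d9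
  have h2 := Real.log_two_lt_d9
  constructor <;> norm_num at h1 h2 ⊢ <;> linarith

lemma log_bd_3 : 1098612287/1000000000 ≤ Real.log 3 ∧ Real.log 3 ≤ 1098612291/1000000000 := by
  have h1 := Real.log_three_gt_d9
  have h2 := Real.log_three_lt_d9
  constructor <;> norm_num at h1 h2 ⊢ <;> linarith

lemma log_bd_5 : 1609437910/1000000000 ≤ Real.log 5 ∧ Real.log 5 ≤ 1609437914/1000000000 := by
  have h1 := Real.log_five_gt_d9
  have h2 := Real.log_five_lt_d9
  constructor <;> norm_num at h1 h2 ⊢ <;> linarith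

lemma log_bd_7 : 1945910147/1000000000 ≤ Real.log 7 ∧ Real.log 7 ≤ 1945910151/1000000000 := by
  have e2401 : Real.log 2401 = 4 * Real.log 7 := by
    rw [show (2401:ℝ) = 7^4 by norm_num]
    simp only [Real.log_pow]; norm_num
  have e2400 : Real.log 2400 = 5 * Real.log 2 + 1 * Real.log 3 + 2 * Real.log 5 := by
    rw [show (2400:ℝ) = 2^5 * 3^1 * 5^2 by norm_num]
    rw [Real.log_mul (by norm_num) (by norm_num)]
    rw [Real.log_mul (by norm_num) (by norm_num)]
    simp only [Real.log_pow]; norm_num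
  have h := log_ratio 2401 2400 (by norm_num) (by norm_num)
  rw [e2401, e2400] at h
  norm_num at h
  have a2 := Real.log_two_gt_d9
  have b2 := Real.log_two_lt_d9
  norm_num at a2 b2
  have a3 := Real.log_three_gt_d9
  have b3 := Real.log_three_lt_d9
  norm_num at a3 b3
  have a5 := Real.log_five_gt_d9
  have b5 := Real.log_five_lt_d9
  norm_num at a5 b5
  obtain ⟨h1, h2⟩ := h
  constructor <;> linarith

lemma log_bd_11 : 2397895268/1000000000 ≤ Real.log 11 ∧ Real.log 11 ≤ 2397895278/1000000000 := by
  have e9801 : Real.log 9801 = 4 * Real.log 3 + 2 * Real.log 11 := by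
    rw [show (9801:ℝ) = 3^4 * 11^2 by norm_num]
    rw [Real.log_mul (by norm_num) (by norm_num)]
    simp only [Real.log_pow]; norm_num
  have e9800 : Real.log 9800 = 3 * Real.log 2 + 2 * Real.log 5 + 2 * Real.log 7 := by
    rw [show (9800:ℝ) = 2^3 * 5^2 * 7^2 by norm_num]
    rw [Real.log_mul (by norm_num) (by norm_num)]
    rw [Real.log_mul (by norm_num) (by norm_num)]
    simp only [Real.log_pow]; norm_num
  have h := log_ratio 9801 9800 (by norm_num) (by norm_num)
  rw [e9801, e9800] at h
  norm_num at h
  have a2 := Real.log_two_gt_d9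
  have b2 := Real.log_two_lt_d9
  norm_num at a2 b2
  have a3 := Real.log_three_gt_d9
  have b3 := Real.log_three_lt_d9
  norm_num at a3 b3
  have a5 := Real.log_five_gt_d9
  have b5 := Real.log_five_lt_d9
  norm_num at a5 b5
  obtain ⟨a7, b7⟩ := log_bd_7
  obtain ⟨h1, h2⟩ := h
  constructor <;> linarith

lemma log_bd_13 : 2564949345/1000000000 ≤ Real.log 13 ∧ Real.log 13 ≤ 2564949369/1000000000 := by
  have e1001 : Real.log 1001 = 1 * Real.log 7 + 1 * Real.log 11 + 1 * Real.log 13 := by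
    rw [show (1001:ℝ) = 7^1 * 11^1 * 13^1 by norm_num]
    rw [Real.log_mul (by norm_num) (by norm_num)]
    rw [Real.log_mul (by norm_num) (by norm_num)]
    simp only [Real.log_pow]; norm_num
  have e1000 : Real.log 1000 = 3 * Real.log 2 + 3 * Real.log 5 := by
    rw [show (1000:ℝ) = 2^3 * 5^3 by norm_num]
    rw [Real.log_mul (by norm_num) (by norm_num)]
    simp only [Real.log_pow]; norm_num
  have h := log_ratio 1001 1000 (by norm_num) (by norm_num)
  rw [e1001, e1000] at h
  norm_num at h
  have a2 := Real.log_two_gt_d9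
  have b2 := Real.log_two_lt_d9
  norm_num at a2 b2
  have a5 := Real.log_five_gt_d9
  have b5 := Real.log_five_lt_d9
  norm_num at a5 b5
  obtain ⟨a7, b7⟩ := log_bd_7
  obtain ⟨a11, b11⟩ := log_bd_11
  obtain ⟨h1, h2⟩ := h
  constructor <;> linarith

lemma log_bd_17 : 2833213332/1000000000 ≤ Real.log 17 ∧ Real.log 17 ≤ 2833213356/1000000000 := by
  have e2601 : Real.log 2601 = 2 * Real.log 3 + 2 * Real.log 17 := by
    rw [show (2601:ℝ) = 3^2 * 17^2 by norm_num]
    rw [Real.log_mul (by norm_num) (by norm_num)]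
    simp only [Real.log_pow]; norm_num
  have e2600 : Real.log 2600 = 3 * Real.log 2 + 2 * Real.log 5 + 1 * Real.log 13 := by
    rw [show (2600:ℝ) = 2^3 * 5^2 * 13^1 by norm_num]
    rw [Real.log_mul (by norm_num) (by norm_num)]
    rw [Real.log_mul (by norm_num) (by norm_num)]
    simp only [Real.log_pow]; norm_num
  have h := log_ratio 2601 2600 (by norm_num) (by norm_num)
  rw [e2601, e2600] at h
  norm_num at h
  have a2 := Real.log_two_gt_d9
  have b2 := Real.log_two_lt_d9
  norm_num at a2 b2
  have a3 := Real.log_three_gt_d9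
  have b3 := Real.log_three_lt_d9
  norm_num at a3 b3
  have a5 := Real.log_five_gt_d9
  have b5 := Real.log_five_lt_d9
  norm_num at a5 b5
  obtain ⟨a13, b13⟩ := log_bd_13
  obtain ⟨h1, h2⟩ := h
  constructor <;> linarith

lemma log_bd_19 : 2944438974/1000000000 ≤ Real.log 19 ∧ Real.log 19 ≤ 2944438984/1000000000 := by
  have e1216 : Real.log 1216 = 6 * Real.log 2 + 1 * Real.log 19 := by
    rw [show (1216:ℝ) = 2^6 * 19^1 by norm_num]
    rw [Real.log_mul (by norm_num) (by norm_num)]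
    simp only [Real.log_pow]; norm_num
  have e1215 : Real.log 1215 = 5 * Real.log 3 + 1 * Real.log 5 := by
    rw [show (1215:ℝ) = 3^5 * 5^1 by norm_num]
    rw [Real.log_mul (by norm_num) (by norm_num)]
    simp only [Real.log_pow]; norm_num
  have h := log_ratio 1216 1215 (by norm_num) (by norm_num)
  rw [e1216, e1215] at h
  norm_num at h
  have a2 := Real.log_two_gt_d9
  have b2 := Real.log_two_lt_d9
  norm_num at a2 b2
  have a3 := Real.log_three_gt_d9
  have b3 := Real.log_three_lt_d9
  norm_num at a3 b3
  have a5 := Real.log_five_gt_d9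
  have b5 := Real.log_five_lt_d9
  norm_num at a5 b5
  obtain ⟨h1, h2⟩ := h
  constructor <;> linarith

lemma log_bd_4 : 1386294321/1000000000 ≤ Real.log 4 ∧ Real.log 4 ≤ 1386294401/1000000000 := by
  have e4 : Real.log 4 = 2 * Real.log 2 := by
    rw [show (4:ℝ) = 2^2 by norm_num]
    simp only [Real.log_pow]; norm_num
  obtain ⟨a2, b2⟩ := log_bd_2
  rw [e4]
  constructor <;> linarith

lemma log_bd_6 : 1791759429/1000000000 ≤ Real.log 6 ∧ Real.log 6 ≤ 1791759509/1000000000 := by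
  have e6 : Real.log 6 = 1 * Real.log 2 + 1 * Real.log 3 := by
    rw [show (6:ℝ) = 2^1 * 3^1 by norm_num]
    rw [Real.log_mul (by norm_num) (by norm_num)]
    simp only [Real.log_pow]; norm_num
  obtain ⟨a2, b2⟩ := log_bd_2
  obtain ⟨a3, b3⟩ := log_bd_3
  rw [e6]
  constructor <;> linarith

lemma log_bd_8 : 2079441502/1000000000 ≤ Real.log 8 ∧ Real.log 8 ≤ 2079441582/1000000000 := by
  have e8 : Real.log 8 = 3 * Real.log 2 := by
    rw [show (8:ℝ) = 2^3 by norm_num]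
    simp only [Real.log_pow]; norm_num
  obtain ⟨a2, b2⟩ := log_bd_2
  rw [e8]
  constructor <;> linarith

lemma log_bd_9 : 2197224537/1000000000 ≤ Real.log 9 ∧ Real.log 9 ≤ 2197224617/1000000000 := by
  have e9 : Real.log 9 = 2 * Real.log 3 := by
    rw [show (9:ℝ) = 3^2 by norm_num]
    simp only [Real.log_pow]; norm_num
  obtain ⟨a3, b3⟩ := log_bd_3
  rw [e9]
  constructor <;> linarith

lemma log_bd_10 : 2302585053/1000000000 ≤ Real.log 10 ∧ Real.log 10 ≤ 2302585133/1000000000 := by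
  have e10 : Real.log 10 = 1 * Real.log 2 + 1 * Real.log 5 := by
    rw [show (10:ℝ) = 2^1 * 5^1 by norm_num]
    rw [Real.log_mul (by norm_num) (by norm_num)]
    simp only [Real.log_pow]; norm_num
  obtain ⟨a2, b2⟩ := log_bd_2
  obtain ⟨a5, b5⟩ := log_bd_5
  rw [e10]
  constructor <;> linarith

lemma log_bd_12 : 2484906610/1000000000 ≤ Real.log 12 ∧ Real.log 12 ≤ 2484906690/1000000000 := by
  have e12 : Real.log 12 = 2 * Real.log 2 + 1 * Real.log 3 := by
    rw [show (12:ℝ) = 2^2 * 3^1 by norm_num]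
    rw [Real.log_mul (by norm_num) (by norm_num)]
    simp only [Real.log_pow]; norm_num
  obtain ⟨a2, b2⟩ := log_bd_2
  obtain ⟨a3, b3⟩ := log_bd_3
  rw [e12]
  constructor <;> linarith

lemma log_bd_14 : 2639057290/1000000000 ≤ Real.log 14 ∧ Real.log 14 ≤ 2639057370/1000000000 := by
  have e14 : Real.log 14 = 1 * Real.log 2 + 1 * Real.log 7 := by
    rw [show (14:ℝ) = 2^1 * 7^1 by norm_num]
    rw [Real.log_mul (by norm_num) (by norm_num)]
    simp only [Real.log_pow]; norm_num
  obtain ⟨a2, b2⟩ := log_bd_2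
  obtain ⟨a7, b7⟩ := log_bd_7
  rw [e14]
  constructor <;> linarith

lemma log_bd_15 : 2708050161/1000000000 ≤ Real.log 15 ∧ Real.log 15 ≤ 2708050241/1000000000 := by
  have e15 : Real.log 15 = 1 * Real.log 3 + 1 * Real.log 5 := by
    rw [show (15:ℝ) = 3^1 * 5^1 by norm_num]
    rw [Real.log_mul (by norm_num) (by norm_num)]
    simp only [Real.log_pow]; norm_num
  obtain ⟨a3, b3⟩ := log_bd_3
  obtain ⟨a5, b5⟩ := log_bd_5
  rw [e15]
  constructor <;> linarith

lemma log_bd_16 : 2772588682/1000000000 ≤ Real.log 16 ∧ Real.log 16 ≤ 2772588762/1000000000 := by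
  have e16 : Real.log 16 = 4 * Real.log 2 := by
    rw [show (16:ℝ) = 2^4 by norm_num]
    simp only [Real.log_pow]; norm_num
  obtain ⟨a2, b2⟩ := log_bd_2
  rw [e16]
  constructor <;> linarith

lemma log_bd_18 : 2890371718/1000000000 ≤ Real.log 18 ∧ Real.log 18 ≤ 2890371798/1000000000 := by
  have e18 : Real.log 18 = 1 * Real.log 2 + 2 * Real.log 3 := by
    rw [show (18:ℝ) = 2^1 * 3^2 by norm_num]
    rw [Real.log_mul (by norm_num) (by norm_num)]
    simp only [Real.log_pow]; norm_num
  obtain ⟨a2, b2⟩ := log_bd_2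
  obtain ⟨a3, b3⟩ := log_bd_3
  rw [e18]
  constructor <;> linarith

lemma log_bd_20 : 2995732234/1000000000 ≤ Real.log 20 ∧ Real.log 20 ≤ 2995732314/1000000000 := by
  have e20 : Real.log 20 = 2 * Real.log 2 + 1 * Real.log 5 := by
    rw [show (20:ℝ) = 2^2 * 5^1 by norm_num]
    rw [Real.log_mul (by norm_num) (by norm_num)]
    simp only [Real.log_pow]; norm_num
  obtain ⟨a2, b2⟩ := log_bd_2
  obtain ⟨a5, b5⟩ := log_bd_5
  rw [e20]
  constructor <;> linarith


lemma sum20 (f : ℕ → ℝ) : ∑ d ∈ Icc 1 20, f d = f 1 + f 2 + f 3 + f 4 + f 5 + f 6 + f 7 + f 8 + f 9 + f 10 +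
    f 11 + f 12 + f 13 + f 14 + f 15 + f 16 + f 17 + f 18 + f 19 + f 20 := by
  simp [Finset.sum_Icc_succ_top]

lemma sq_bd {a b x : ℝ} (ha : 0 ≤ a) (h : a ≤ x ∧ x ≤ b) : a ^ 2 ≤ x ^ 2 ∧ x ^ 2 ≤ b ^ 2 :=
  ⟨pow_le_pow_left₀ ha h.1 2, pow_le_pow_left₀ (ha.trans h.1) h.2 2⟩

lemma kUp_sum : ∑ d ∈ Icc 1 20, kapR kUp d = 0 := by
  rw [sum20]; simp only [kapR, kap, kUp]; norm_num

lemma kUp_sumd : ∑ d ∈ Icc 1 20, kapR kUp d * d = -196292 := by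
  rw [sum20]; simp only [kapR, kap, kUp]; norm_num

lemma kUp_suma : ∑ d ∈ Icc 1 20, |kapR kUp d| * d = 827200 := by
  rw [sum20]; simp only [kapR, kap, kUp]; norm_num [abs_of_nonneg, abs_of_neg]

lemma kUp_suma2 : ∑ d ∈ Icc 1 20, |kapR kUp d| * d ^ 2 = 6806510 := by
  rw [sum20]; simp only [kapR, kap, kUp]; norm_num [abs_of_nonneg, abs_of_neg]

lemma kUp_c0 : (10000197:ℝ)/100 ≤ - ∑ d ∈ Icc 1 20, kapR kUp d * Real.log d ∧ - ∑ d ∈ Icc 1 20, kapR kUp d * Real.log d ≤ (10000202:ℝ)/100 := by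
  rw [sum20]; simp only [kapR, kap, kUp]; norm_num
  obtain ⟨a2, b2⟩ := log_bd_2
  obtain ⟨a3, b3⟩ := log_bd_3
  obtain ⟨a4, b4⟩ := log_bd_4
  obtain ⟨a5, b5⟩ := log_bd_5
  obtain ⟨a6, b6⟩ := log_bd_6
  obtain ⟨a7, b7⟩ := log_bd_7
  obtain ⟨a8, b8⟩ := log_bd_8
  obtain ⟨a9, b9⟩ := log_bd_9
  obtain ⟨a10, b10⟩ := log_bd_10
  obtain ⟨a11, b11⟩ := log_bd_11
  obtain ⟨a12, b12⟩ := log_bd_12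
  obtain ⟨a13, b13⟩ := log_bd_13
  obtain ⟨a14, b14⟩ := log_bd_14
  obtain ⟨a15, b15⟩ := log_bd_15
  obtain ⟨a16, b16⟩ := log_bd_16
  obtain ⟨a17, b17⟩ := log_bd_17
  obtain ⟨a18, b18⟩ := log_bd_18
  obtain ⟨a19, b19⟩ := log_bd_19
  obtain ⟨a20, b20⟩ := log_bd_20
  constructor <;> linarith

lemma kUp_sq : (-11475298:ℝ)/100 ≤ ∑ d ∈ Icc 1 20, kapR kUp d * Real.log d ^ 2 ∧ ∑ d ∈ Icc 1 20, kapR kUp d * Real.log d ^ 2 ≤ (-11475285:ℝ)/100 := by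
  rw [sum20]; simp only [kapR, kap, kUp]; norm_num
  obtain ⟨a2, b2⟩ := sq_bd (by norm_num) log_bd_2
  obtain ⟨a3, b3⟩ := sq_bd (by norm_num) log_bd_3
  obtain ⟨a4, b4⟩ := sq_bd (by norm_num) log_bd_4
  obtain ⟨a5, b5⟩ := sq_bd (by norm_num) log_bd_5
  obtain ⟨a6, b6⟩ := sq_bd (by norm_num) log_bd_6
  obtain ⟨a7, b7⟩ := sq_bd (by norm_num) log_bd_7
  obtain ⟨a8, b8⟩ := sq_bd (by norm_num) log_bd_8
  obtain ⟨a9, b9⟩ := sq_bd (by norm_num) log_bd_9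
  obtain ⟨a10, b10⟩ := sq_bd (by norm_num) log_bd_10
  obtain ⟨a11, b11⟩ := sq_bd (by norm_num) log_bd_11
  obtain ⟨a12, b12⟩ := sq_bd (by norm_num) log_bd_12
  obtain ⟨a13, b13⟩ := sq_bd (by norm_num) log_bd_13
  obtain ⟨a14, b14⟩ := sq_bd (by norm_num) log_bd_14
  obtain ⟨a15, b15⟩ := sq_bd (by norm_num) log_bd_15
  obtain ⟨a16, b16⟩ := sq_bd (by norm_num) log_bd_16
  obtain ⟨a17, b17⟩ := sq_bd (by norm_num) log_bd_17
  obtain ⟨a18, b18⟩ := sq_bd (by norm_num) log_bd_18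
  obtain ⟨a19, b19⟩ := sq_bd (by norm_num) log_bd_19
  obtain ⟨a20, b20⟩ := sq_bd (by norm_num) log_bd_20
  norm_num at a2 b2
  norm_num at a3 b3
  norm_num at a4 b4
  norm_num at a5 b5
  norm_num at a6 b6
  norm_num at a7 b7
  norm_num at a8 b8
  norm_num at a9 b9
  norm_num at a10 b10
  norm_num at a11 b11
  norm_num at a12 b12
  norm_num at a13 b13
  norm_num at a14 b14
  norm_num at a15 b15
  norm_num at a16 b16
  norm_num at a17 b17
  norm_num at a18 b18
  norm_num at a19 b19
  norm_num at a20 b20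
  constructor <;> linarith

lemma kLo_sum : ∑ d ∈ Icc 1 20, kapR kLo d = 0 := by
  rw [sum20]; simp only [kapR, kap, kLo]; norm_num

lemma kLo_sumd : ∑ d ∈ Icc 1 20, kapR kLo d * d = 203392 := by
  rw [sum20]; simp only [kapR, kap, kLo]; norm_num

lemma kLo_suma : ∑ d ∈ Icc 1 20, |kapR kLo d| * d = 825172 := by
  rw [sum20]; simp only [kapR, kap, kLo]; norm_num [abs_of_nonneg, abs_of_neg]

lemma kLo_suma2 : ∑ d ∈ Icc 1 20, |kapR kLo d| * d ^ 2 = 6420414 := by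
  rw [sum20]; simp only [kapR, kap, kLo]; norm_num [abs_of_nonneg, abs_of_neg]

lemma kLo_c0 : (-9999778:ℝ)/100 ≤ - ∑ d ∈ Icc 1 20, kapR kLo d * Real.log d ∧ - ∑ d ∈ Icc 1 20, kapR kLo d * Real.log d ≤ (-9999773:ℝ)/100 := by
  rw [sum20]; simp only [kapR, kap, kLo]; norm_num
  obtain ⟨a2, b2⟩ := log_bd_2
  obtain ⟨a3, b3⟩ := log_bd_3
  obtain ⟨a4, b4⟩ := log_bd_4
  obtain ⟨a5, b5⟩ := log_bd_5
  obtain ⟨a6, b6⟩ := log_bd_6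
  obtain ⟨a7, b7⟩ := log_bd_7
  obtain ⟨a8, b8⟩ := log_bd_8
  obtain ⟨a9, b9⟩ := log_bd_9
  obtain ⟨a10, b10⟩ := log_bd_10
  obtain ⟨a11, b11⟩ := log_bd_11
  obtain ⟨a12, b12⟩ := log_bd_12
  obtain ⟨a13, b13⟩ := log_bd_13
  obtain ⟨a14, b14⟩ := log_bd_14
  obtain ⟨a15, b15⟩ := log_bd_15
  obtain ⟨a16, b16⟩ := log_bd_16
  obtain ⟨a17, b17⟩ := log_bd_17
  obtain ⟨a18, b18⟩ := log_bd_18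
  obtain ⟨a19, b19⟩ := log_bd_19
  obtain ⟨a20, b20⟩ := log_bd_20
  constructor <;> linarith

lemma kLo_sq : (11624355:ℝ)/100 ≤ ∑ d ∈ Icc 1 20, kapR kLo d * Real.log d ^ 2 ∧ ∑ d ∈ Icc 1 20, kapR kLo d * Real.log d ^ 2 ≤ (11624368:ℝ)/100 := by
  rw [sum20]; simp only [kapR, kap, kLo]; norm_num
  obtain ⟨a2, b2⟩ := sq_bd (by norm_num) log_bd_2
  obtain ⟨a3, b3⟩ := sq_bd (by norm_num) log_bd_3
  obtain ⟨a4, b4⟩ := sq_bd (by norm_num) log_bd_4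
  obtain ⟨a5, b5⟩ := sq_bd (by norm_num) log_bd_5
  obtain ⟨a6, b6⟩ := sq_bd (by norm_num) log_bd_6
  obtain ⟨a7, b7⟩ := sq_bd (by norm_num) log_bd_7
  obtain ⟨a8, b8⟩ := sq_bd (by norm_num) log_bd_8
  obtain ⟨a9, b9⟩ := sq_bd (by norm_num) log_bd_9
  obtain ⟨a10, b10⟩ := sq_bd (by norm_num) log_bd_10
  obtain ⟨a11, b11⟩ := sq_bd (by norm_num) log_bd_11
  obtain ⟨a12, b12⟩ := sq_bd (by norm_num) log_bd_12
  obtain ⟨a13, b13⟩ := sq_bd (by norm_num) log_bd_13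
  obtain ⟨a14, b14⟩ := sq_bd (by norm_num) log_bd_14
  obtain ⟨a15, b15⟩ := sq_bd (by norm_num) log_bd_15
  obtain ⟨a16, b16⟩ := sq_bd (by norm_num) log_bd_16
  obtain ⟨a17, b17⟩ := sq_bd (by norm_num) log_bd_17
  obtain ⟨a18, b18⟩ := sq_bd (by norm_num) log_bd_18
  obtain ⟨a19, b19⟩ := sq_bd (by norm_num) log_bd_19
  obtain ⟨a20, b20⟩ := sq_bd (by norm_num) log_bd_20
  norm_num at a2 b2
  norm_num at a3 b3
  norm_num at a4 b4
  norm_num at a5 b5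
  norm_num at a6 b6
  norm_num at a7 b7
  norm_num at a8 b8
  norm_num at a9 b9
  norm_num at a10 b10
  norm_num at a11 b11
  norm_num at a12 b12
  norm_num at a13 b13
  norm_num at a14 b14
  norm_num at a15 b15
  norm_num at a16 b16
  norm_num at a17 b17
  norm_num at a18 b18
  norm_num at a19 b19
  norm_num at a20 b20
  constructor <;> linarith

lemma FF_up (t : ℝ) (ht : 1 ≤ t) :
    (- ∑ d ∈ Icc 1 20, kapR kUp d * Real.log d) * (t - 1) ≤ FF (kapR kUp) t := by
  have h := kUp_c0
  refine FFbound kUp rfl _ chkUp _ rfl ?_ kUp_sum ?_ t ht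
  · push_cast; linarith [h.2]
  · rw [kUp_suma2, kUp_sumd]; linarith [h.1]

lemma FF_lo (t : ℝ) (ht : 1 ≤ t) :
    (- ∑ d ∈ Icc 1 20, kapR kLo d * Real.log d) * (t - 1) ≤ FF (kapR kLo) t := by
  have h := kLo_c0
  refine FFbound kLo rfl _ chkLo _ rfl ?_ kLo_sum ?_ t ht
  · push_cast; linarith [h.2]
  · rw [kLo_suma2, kLo_sumd]; linarith [h.1]

lemma JJ_le {x : ℝ} (hx : 20 ≤ x) :
    JJ x ≤ Real.log x - 1 - 0.57375 + 8.3 * ((Real.log x + 2) / x) := by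
  have h := JJ_upper (kapR kUp) kUp_sum _ rfl FF_up hx
  have hc := kUp_c0
  have hs := kUp_sq
  rw [kUp_suma] at h
  have hE : 0 ≤ (Real.log x + 2) / x := by
    have := Real.log_nonneg (show 1 ≤ x by linarith)
    positivity
  set c := - ∑ d ∈ Icc 1 20, kapR kUp d * Real.log d
  set E := (Real.log x + 2) / x
  have hc1 := hc.1
  have hc2 := hc.2
  by_contra hcon
  push Not at hcon
  have hcpos : 0 < c := by linarith
  have h5 := mul_lt_mul_of_pos_left hcon hcpos
  have h6 := mul_le_mul_of_nonneg_right hc1 hE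
  have h7 := hs.2
  nlinarith

lemma JJ_ge {x : ℝ} (hx : 20 ≤ x) :
    Real.log x - 1 - 0.58124 - 8.3 * ((Real.log x + 2) / x) ≤ JJ x := by
  have h := JJ_upper (kapR kLo) kLo_sum _ rfl FF_lo hx
  have hc := kLo_c0
  have hs := kLo_sq
  rw [kLo_suma] at h
  have hE : 0 ≤ (Real.log x + 2) / x := by
    have := Real.log_nonneg (show 1 ≤ x by linarith)
    positivity
  set c := - ∑ d ∈ Icc 1 20, kapR kLo d * Real.log d
  set E := (Real.log x + 2) / x
  have hc1 := hc.1
  have hc2 := hc.2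
  by_contra hcon
  push Not at hcon
  have hcpos : 0 < -c := by linarith
  have h5 := mul_lt_mul_of_pos_left hcon hcpos
  have h6 := mul_le_mul_of_nonneg_right hc2 hE
  have h7 := hs.2
  nlinarith

end

section
open Finset Filter Topology

local notation "Λ" => ArithmeticFunction.vonMangoldt

noncomputable def DD (φ : ℝ → ℝ) (x : ℝ) : ℝ := ∑ n ∈ Icc 0 ⌊x⌋₊, Λ n * (φ n - φ x)

lemma JJ_eq_DD (x : ℝ) : JJ x = DD (fun t => 1 / t) x := rfl

noncomputable def psi (x : ℝ) : ℝ := ∑ n ∈ Icc 0 ⌊x⌋₊, Λ n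

lemma DD_cont (φ : ℝ → ℝ) (y z : ℝ) (hy : 2 ≤ y) (hφ : ContinuousOn φ (Set.Icc y z))
    (hanti : ∀ s t : ℝ, 2 ≤ s → s ≤ t → φ t ≤ φ s) : ContinuousOn (DD φ) (Set.Icc y z) := by
  have h : Set.EqOn (DD φ) (fun t => ∑ n ∈ Icc 0 ⌊z⌋₊, Λ n * max (φ n - φ t) 0) (Set.Icc y z) := by
    intro t ht
    have hle : ⌊t⌋₊ ≤ ⌊z⌋₊ := Nat.floor_le_floor ht.2
    have ht2 : 2 ≤ t := hy.trans ht.1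
    simp only [DD]
    have h1 : ∑ n ∈ Icc 0 ⌊t⌋₊, Λ n * (φ n - φ t) = ∑ n ∈ Icc 0 ⌊t⌋₊, Λ n * max (φ n - φ t) 0 := by
      apply sum_congr rfl
      intro n hn
      rw [mem_Icc] at hn
      rcases Nat.lt_or_ge n 2 with h | h
      · interval_cases n <;> simp
      · rw [max_eq_left]
        have := hanti n t (by exact_mod_cast h) ((Nat.le_floor_iff (by linarith)).mp hn.2)
        linarith
    rw [h1]
    apply sum_subset
    · intro a; simp only [mem_Icc]; omega
    · intro n hn hn'
      simp only [mem_Icc] at hn hn'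
      rw [max_eq_right, mul_zero]
      have : ⌊t⌋₊ < n := by omega
      rw [Nat.floor_lt (by linarith)] at this
      have := hanti t n ht2 this.le
      linarith
  apply ContinuousOn.congr _ h
  apply continuousOn_finsetSum
  intro n _
  apply ContinuousOn.mul continuousOn_const
  exact ContinuousOn.sup (continuousOn_const.sub hφ) continuousOn_const

lemma DD_deriv (φ : ℝ → ℝ) (φ' x : ℝ) (hx : 0 ≤ x) (hd : HasDerivAt φ φ' x) :
    HasDerivWithinAt (DD φ) (- φ' * psi x) (Set.Ici x) x := by
  have h1 : HasDerivAt (fun t => ∑ n ∈ Icc 0 ⌊x⌋₊, Λ n * (φ n - φ t)) (- φ' * psi x) x := by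
    have : HasDerivAt (fun t => ∑ n ∈ Icc 0 ⌊x⌋₊, Λ n * (φ n - φ t)) (∑ n ∈ Icc 0 ⌊x⌋₊, Λ n * (0 - φ')) x := by
      apply HasDerivAt.fun_sum
      intro n _
      exact ((hasDerivAt_const x (φ n)).sub hd).const_mul _
    refine this.congr_deriv ?_
    rw [← sum_mul]; unfold psi; ring
  refine h1.hasDerivWithinAt.congr_of_eventuallyEq ?_ rfl
  have : ∀ᶠ t in 𝓝[≥] x, t < (⌊x⌋₊ : ℝ) + 1 := by
    apply eventually_nhdsWithin_of_eventually_nhds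
    exact eventually_lt_nhds (Nat.lt_floor_add_one x)
  filter_upwards [this, self_mem_nhdsWithin] with t ht hxt
  have : ⌊t⌋₊ = ⌊x⌋₊ := by
    apply le_antisymm
    · have : ⌊t⌋₊ < ⌊x⌋₊ + 1 := by
        rw [Nat.floor_lt (hx.trans hxt)]; exact_mod_cast ht
      omega
    · exact Nat.floor_le_floor hxt
  simp only [DD, this]

noncomputable def Dm (x : ℝ) : ℝ := DD (fun t => 1 / (t * Real.log t)) x
noncomputable def ww (x : ℝ) : ℝ := 1 / Real.log x + 1 / Real.log x ^ 2

lemma Dm_mono (a y z : ℝ) (hy : 2 ≤ y) (hz : y ≤ z)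
    (hR : ∀ u, y ≤ u → Real.log u + a ≤ JJ u) :
    Dm y - Real.log (Real.log y) + 1 / Real.log y - ww y * (JJ y - Real.log y - a) ≤
    Dm z - Real.log (Real.log z) + 1 / Real.log z := by
  have lpos : ∀ t, 2 ≤ t → 0 < Real.log t := fun t ht => Real.log_pos (by linarith)
  have w_nonneg : ∀ t, 2 ≤ t → 0 ≤ ww t := by
    intro t ht; have := lpos t ht; unfold ww; positivity
  set H : ℝ → ℝ := fun t => Dm t - Real.log (Real.log t) + 1 / Real.log t - ww t * (JJ t - Real.log t - a) with hH
  have key : - H z ≤ - H y := by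
    have hcl : ContinuousOn Real.log (Set.Icc y z) := by
      apply Real.continuousOn_log.mono
      intro t ht; have := ht.1; simp; linarith
    have hcl0 : ∀ t ∈ Set.Icc y z, Real.log t ≠ 0 := fun t ht => (lpos t (hy.trans ht.1)).ne'
    have ht0 : ∀ t ∈ Set.Icc y z, t ≠ 0 := fun t ht => by have := ht.1; intro h; linarith
    have cD : ContinuousOn Dm (Set.Icc y z) := by
      apply DD_cont _ y z hy
      · exact continuousOn_const.div (continuousOn_id.mul hcl) (fun t ht => mul_ne_zero (ht0 t ht) (hcl0 t ht))
      · intro s t hs hst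
        have := lpos s hs
        have h2 : Real.log s ≤ Real.log t := Real.log_le_log (by linarith) hst
        apply one_div_le_one_div_of_le (by positivity)
        apply mul_le_mul hst h2 this.le (by linarith)
    have cJ : ContinuousOn JJ (Set.Icc y z) := by
      apply DD_cont (fun t => 1 / t) y z hy
      · exact continuousOn_const.div continuousOn_id (fun t ht => ht0 t ht)
      · intro s t hs hst
        apply one_div_le_one_div_of_le (by linarith) hst
    have cw : ContinuousOn ww (Set.Icc y z) := by
      unfold ww
      exact (continuousOn_const.div hcl hcl0).add (continuousOn_const.div (hcl.pow 2) (fun t ht => pow_ne_zero 2 (hcl0 t ht)))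
    have cH : ContinuousOn (fun t => - H t) (Set.Icc y z) := by
      exact (((cD.sub (hcl.log hcl0)).add (continuousOn_const.div hcl hcl0)).sub (cw.mul ((cJ.sub hcl).sub continuousOn_const))).neg
    have hder : ∀ t ∈ Set.Ico y z, HasDerivWithinAt (fun t => - H t)
        (- ((1 / (t * Real.log t ^ 2) + 2 / (t * Real.log t ^ 3)) * (JJ t - Real.log t - a))) (Set.Ici t) t := by
      intro t ht
      have ht0 : 0 < t := by have := ht.1; linarith
      have hl0 : 0 < Real.log t := lpos t (hy.trans ht.1)
      have dl := Real.hasDerivAt_log ht0.ne'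
      have d1 := DD_deriv (fun t => 1 / t) (-(1 / t ^ 2)) t ht0.le (by
        have := (hasDerivAt_const t (1:ℝ)).div (hasDerivAt_id t) ht0.ne'
        refine HasDerivAt.congr_deriv this ?_
        simp
        field_simp)
      have d2 := DD_deriv (fun t => 1 / (t * Real.log t)) (-((Real.log t + 1) / (t * Real.log t) ^ 2)) t ht0.le (by
        have := (hasDerivAt_const t (1:ℝ)).div ((hasDerivAt_id t).mul dl) (mul_pos ht0 hl0).ne'
        refine HasDerivAt.congr_deriv this ?_
        simp
        field_simp; ring)
      have dll := (dl.log hl0.ne').hasDerivWithinAt (s := Set.Ici t)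
      have dli := ((hasDerivAt_const t (1:ℝ)).div dl hl0.ne')
      have dli2 := ((hasDerivAt_const t (1:ℝ)).div (dl.pow 2) (pow_ne_zero 2 hl0.ne'))
      have dw := (dli.add dli2).hasDerivWithinAt (s := Set.Ici t)
      have := (((d2.sub dll).add dli.hasDerivWithinAt).sub (dw.mul ((d1.sub dl.hasDerivWithinAt).sub (hasDerivWithinAt_const t _ a)))).neg
      refine HasDerivWithinAt.congr_deriv this ?_
      simp only [Pi.add_apply, Pi.sub_apply, Pi.div_apply, Pi.pow_apply]
      rw [JJ_eq_DD]
      generalize DD (fun t => 1 / t) t = J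
      generalize psi t = P
      generalize Real.log t = l at *
      push_cast
      field_simp
      ring
    refine image_le_of_deriv_right_le_deriv_boundary (B := fun _ => - H y) (B' := fun _ => 0) cH hder le_rfl
      continuousOn_const (fun x _ => (hasDerivAt_const x _).hasDerivWithinAt) ?_ (Set.right_mem_Icc.mpr hz)
    intro t ht
    have ht0 : 0 < t := by have := ht.1; linarith
    have hl0 : 0 < Real.log t := lpos t (hy.trans ht.1)
    have := hR t ht.1
    have : 0 ≤ JJ t - Real.log t - a := by linarith
    rw [neg_nonpos]
    positivity
  have h2 := hR z hz
  have h3 : 0 ≤ ww z * (JJ z - Real.log z - a) := mul_nonneg (w_nonneg z (hy.trans hz)) (by linarith)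
  simp only [hH] at key
  linarith

end

section
open Finset Filter Topology

local notation "Λ" => ArithmeticFunction.vonMangoldt

lemma pp_sum (N : ℕ) (h : ℕ → ℝ) :
    ∑ n ∈ Icc 1 N, Λ n * h n =
      ∑ p ∈ (Icc 1 N).filter Nat.Prime, ∑ k ∈ Icc 1 (Nat.log p N), Real.log p * h (p ^ k) := by
  have h1 : ∑ n ∈ Icc 1 N, Λ n * h n = ∑ n ∈ (Icc 1 N).filter IsPrimePow, Λ n * h n := by
    symm
    apply sum_filter_of_ne
    intro n _ hne
    apply ArithmeticFunction.vonMangoldt_ne_zero_iff.mp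
    intro h0; rw [h0] at hne; simp at hne
  rw [h1, sum_sigma']
  symm
  apply sum_bij (fun (x : (_ : ℕ) × ℕ) _ => x.1 ^ x.2)
  · rintro ⟨p, k⟩ hx
    simp only [mem_sigma, mem_filter, mem_Icc] at hx ⊢
    obtain ⟨⟨⟨a, b⟩, c⟩, d, e⟩ := hx
    refine ⟨⟨Nat.pos_of_ne_zero (pow_ne_zero _ (by omega)), ?_⟩, c.prime.isPrimePow.pow (by omega)⟩
    exact Nat.pow_le_of_le_log (by omega) e
  · rintro ⟨p, k⟩ hx ⟨q, l⟩ hy hxy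
    simp only [mem_sigma, mem_filter, mem_Icc] at hx hy hxy
    have := hx.1.2.pow_inj' hy.1.2 (by omega) (by omega) hxy
    rw [this.1, this.2]
  · intro n hn
    simp only [mem_filter, mem_Icc] at hn
    obtain ⟨⟨a, b⟩, hpp⟩ := hn
    rw [isPrimePow_nat_iff] at hpp
    obtain ⟨p, k, hp, hk, rfl⟩ := hpp
    refine ⟨⟨p, k⟩, ?_, rfl⟩
    simp only [mem_sigma, mem_filter, mem_Icc]
    refine ⟨⟨⟨hp.pos, (Nat.le_self_pow (by omega) p).trans b⟩, hp⟩, hk, ?_⟩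
    exact Nat.le_log_of_pow_le hp.one_lt b
  · rintro ⟨p, k⟩ hx
    simp only [mem_sigma, mem_filter, mem_Icc] at hx
    simp only
    rw [ArithmeticFunction.vonMangoldt_apply_pow (by omega), ArithmeticFunction.vonMangoldt_apply_prime hx.1.2]

lemma partial_log (q : ℝ) (h0 : 0 ≤ q) (h1 : q < 1) (K : ℕ) :
    ∑ k ∈ Icc 1 K, q ^ k / k ≤ - Real.log (1 - q) := by
  have hs := Real.hasSum_pow_div_log_of_abs_lt_one (x := q) (by rw [abs_of_nonneg h0]; exact h1)
  have := sum_le_hasSum (range K) (fun i _ => by positivity) hs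
  refine le_trans (le_of_eq ?_) this
  have e : Icc 1 K = Ico (0+1) (K+1) := by ext; simp
  rw [e, ← Finset.sum_Ico_add', ← Finset.range_eq_Ico]
  apply sum_congr rfl; intros; push_cast; rfl

noncomputable def aN (n : ℕ) : ℝ := Λ n * (1 / (n * Real.log n))

lemma aN_nonneg (n : ℕ) : 0 ≤ aN n := by
  unfold aN
  have : 0 ≤ Λ n := ArithmeticFunction.vonMangoldt_nonneg
  have := Real.log_natCast_nonneg n
  positivity

lemma S_le_prod (δ : ℝ) (hδ : 0 < δ) (N : ℕ) :
    ∑ n ∈ Icc 1 N, aN n * (n:ℝ) ^ (-δ) ≤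
      Real.log (∏ p ∈ (Icc 1 N).filter Nat.Prime, (1 - (p:ℝ) ^ (-(1+δ)))⁻¹) := by
  have h1 : ∑ n ∈ Icc 1 N, aN n * (n:ℝ) ^ (-δ) = ∑ n ∈ Icc 1 N, Λ n * (1 / (n * Real.log n) * (n:ℝ) ^ (-δ)) := by
    apply sum_congr rfl; intros; unfold aN; ring
  rw [h1, pp_sum, Real.log_prod]
  · apply sum_le_sum
    intro p hp
    simp only [mem_filter, mem_Icc] at hp
    have hp1 : (1:ℝ) < p := by exact_mod_cast hp.2.one_lt
    have hq : (p:ℝ) ^ (-(1+δ)) < 1 := Real.rpow_lt_one_of_one_lt_of_neg hp1 (by linarith)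
    have hq0 : 0 ≤ (p:ℝ) ^ (-(1+δ)) := by positivity
    rw [Real.log_inv]
    refine le_trans (le_of_eq ?_) (partial_log _ hq0 hq (Nat.log p N))
    apply sum_congr rfl
    intro k hk
    rw [mem_Icc] at hk
    have hl : 0 < Real.log p := Real.log_pos hp1
    have hk0 : (0:ℝ) < k := by exact_mod_cast hk.1
    push_cast
    rw [Real.log_pow, ← Real.rpow_natCast, ← Real.rpow_natCast, ← Real.rpow_mul (by linarith), ← Real.rpow_mul (by linarith)]
    have e : -(1+δ) * (k:ℝ) = (k:ℝ) * (-δ) - k := by ring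
    rw [e, Real.rpow_sub (by linarith)]
    field_simp
  · intro p hp
    simp only [mem_filter, mem_Icc] at hp
    have hp1 : (1:ℝ) < p := by exact_mod_cast hp.2.one_lt
    have hq : (p:ℝ) ^ (-(1+δ)) < 1 := Real.rpow_lt_one_of_one_lt_of_neg hp1 (by linarith)
    apply inv_ne_zero; linarith

lemma zeta_sum_le (δ : ℝ) (hδ : 0 < δ) (M : ℕ) :
    ∑ n ∈ range M, (n:ℝ) ^ (-(1 + δ)) ≤ 1 + 1 / δ := by
  have hmono : ∑ n ∈ range M, (n:ℝ) ^ (-(1 + δ)) ≤ ∑ n ∈ range (M+2), (n:ℝ) ^ (-(1 + δ)) := by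
    apply sum_le_sum_of_subset_of_nonneg
    · intro a ha; rw [mem_range] at *; omega
    · intros; positivity
  refine hmono.trans ?_
  rw [sum_range_succ', sum_range_succ']
  have h1 := AntitoneOn.sum_le_integral (x₀ := 1) (a := M) (f := fun t : ℝ => t ^ (-(1+δ))) ?_
  · rw [integral_rpow] at h1
    · have e : -(1+δ) + 1 = -δ := by ring
      rw [e] at h1
      have h2 : ((1 + (M:ℝ)) ^ (-δ) - 1 ^ (-δ)) / (-δ) ≤ 1 / δ := by
        rw [Real.one_rpow, div_neg, ← neg_div]
        apply div_le_div_of_nonneg_right _ hδ.le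
        have : 0 ≤ (1 + (M:ℝ)) ^ (-δ) := by positivity
        linarith
      have h3 : ∑ k ∈ range M, ((k + 1 + 1 : ℕ):ℝ) ^ (-(1 + δ)) = ∑ i ∈ range M, (1 + ((i + 1 : ℕ):ℝ)) ^ (-(1 + δ)) := by
        apply sum_congr rfl; intros; congr 1; push_cast; ring
      rw [h3]
      have h4 : ((0:ℕ):ℝ) ^ (-(1+δ)) = 0 := by
        rw [Nat.cast_zero, Real.zero_rpow]; linarith
      have h5 : ((0 + 1:ℕ):ℝ) ^ (-(1+δ)) = 1 := by simp
      rw [h4, h5]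
      linarith
    · right
      refine ⟨by linarith, ?_⟩
      rw [Set.uIcc_of_le (by have : (0:ℝ) ≤ M := by positivity
                             linarith)]
      simp
  · intro a ha b hb hab
    simp only [Set.mem_Icc] at ha hb
    exact Real.rpow_le_rpow_of_nonpos (by linarith) hab (by linarith)

lemma prod_le_zeta (δ : ℝ) (hδ : 0 < δ) (N : ℕ) :
    ∏ p ∈ (Icc 1 N).filter Nat.Prime, (1 - (p:ℝ) ^ (-(1+δ)))⁻¹ ≤ 1 + 1 / δ := by
  let f : ℕ →* ℝ :=
    { toFun := fun n => (n:ℝ) ^ (-(1+δ))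
      map_one' := by simp
      map_mul' := by
        intro a b
        push_cast
        exact Real.mul_rpow (by positivity) (by positivity) }
  have hf0 : ∀ n, 0 ≤ f n := fun n => by
    show 0 ≤ (n:ℝ) ^ (-(1+δ))
    positivity
  have hsum : Summable f := by
    have := Real.summable_nat_rpow (p := -(1+δ)).mpr (by linarith)
    exact this
  have h1 := EulerProduct.prod_filter_prime_geometric_eq_tsum_factoredNumbers hsum (Icc 1 N)
  have h2 := Summable.tsum_subtype_le (fun n => f n) (Nat.factoredNumbers (Icc 1 N)) hf0 hsum
  have h3 : ∑' n, f n ≤ 1 + 1 / δ := Real.tsum_le_of_sum_range_le hf0 (fun n => zeta_sum_le δ hδ n)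
  calc _ = ∏ p ∈ (Icc 1 N).filter Nat.Prime, (1 - f p)⁻¹ := rfl
    _ ≤ _ := by rw [h1]; exact h2.trans h3

lemma S_le (δ : ℝ) (hδ : 0 < δ) (N : ℕ) :
    ∑ n ∈ Icc 1 N, aN n * (n:ℝ) ^ (-δ) ≤ Real.log (1 + 1 / δ) := by
  refine (S_le_prod δ hδ N).trans (Real.log_le_log ?_ (prod_le_zeta δ hδ N))
  apply prod_pos
  intro p hp
  simp only [mem_filter, mem_Icc] at hp
  have hp1 : (1:ℝ) < p := by exact_mod_cast hp.2.one_lt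
  have hq : (p:ℝ) ^ (-(1+δ)) < 1 := Real.rpow_lt_one_of_one_lt_of_neg hp1 (by linarith)
  apply inv_pos.mpr; linarith

end

section
open Finset Filter Topology

noncomputable def bb (m : ℕ) : ℝ := ∑ n ∈ Icc 1 ⌊Real.exp m⌋₊, aN n

lemma bb_zero : bb 0 = 0 := by
  simp [bb, aN]

lemma bb_nonneg (m : ℕ) : 0 ≤ bb m := sum_nonneg (fun n _ => aN_nonneg n)

lemma bb_S (δ : ℝ) (hδ : 0 < δ) (V : ℕ) :
    ∑ m ∈ range V, Real.exp (-δ) ^ (m+1) * (bb (m+1) - bb m) ≤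
      ∑ n ∈ Icc 1 ⌊Real.exp V⌋₊, aN n * (n:ℝ) ^ (-δ) := by
  induction V with
  | zero => simp [aN]
  | succ V ih =>
    rw [sum_range_succ]
    have hle : ⌊Real.exp V⌋₊ ≤ ⌊Real.exp (V+1:ℕ)⌋₊ :=
      Nat.floor_le_floor (Real.exp_le_exp.mpr (by push_cast; linarith))
    have hsplit : ∀ f : ℕ → ℝ, ∑ n ∈ Icc 1 ⌊Real.exp (V+1:ℕ)⌋₊, f n =
        ∑ n ∈ Icc 1 ⌊Real.exp V⌋₊, f n + ∑ n ∈ Ioc ⌊Real.exp V⌋₊ ⌊Real.exp (V+1:ℕ)⌋₊, f n := by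
      intro f
      have hI : ∀ M, Icc 1 M = Ioc 0 M := fun M => by ext; simp [Nat.lt_iff_add_one_le]
      rw [hI, hI, ← Finset.sum_Ioc_consecutive f (Nat.zero_le _) hle]
    rw [hsplit]
    refine add_le_add ih ?_
    have h1 : bb (V+1) - bb V = ∑ n ∈ Ioc ⌊Real.exp V⌋₊ ⌊Real.exp (V+1:ℕ)⌋₊, aN n := by
      unfold bb; rw [hsplit]; ring
    rw [h1, mul_sum]
    apply sum_le_sum
    intro n hn
    rw [mem_Ioc] at hn
    rw [mul_comm]
    apply mul_le_mul_of_nonneg_left _ (aN_nonneg n)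
    have hn0 : (0:ℝ) < n := by
      have : 0 < n := by omega
      exact_mod_cast this
    have hn2 : (n:ℝ) ≤ Real.exp (V+1:ℕ) := (Nat.le_floor_iff (Real.exp_pos _).le).mp hn.2
    have h2 := Real.rpow_le_rpow_of_nonpos hn0 hn2 (z := -δ) (by linarith)
    refine le_trans (le_of_eq ?_) h2
    rw [← Real.exp_mul, ← Real.exp_nat_mul]

lemma abel_parts (x : ℝ) (d : ℕ → ℝ) (V : ℕ) :
    ∑ m ∈ range V, x ^ (m+1) * (d (m+1) - d m) =
      x ^ V * d V - d 0 + ∑ m ∈ range V, d m * (x ^ m - x ^ (m+1)) := by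
  induction V with
  | zero => simp
  | succ V ih => rw [sum_range_succ, ih, sum_range_succ]; ring

lemma abel_arg (b : ℕ → ℝ) (b0 : b 0 = 0) (hb : ∀ m, 0 ≤ b m)
    (hS : ∀ δ : ℝ, 0 < δ → ∀ V : ℕ, ∑ m ∈ range V, Real.exp (-δ) ^ (m+1) * (b (m+1) - b m) ≤
      Real.log (1 + 1 / δ)) (K : ℝ) (m0 : ℕ)
    (hK : ∀ m : ℕ, m0 ≤ m → Real.log m - 1 / m + K ≤ b m) :
    K ≤ Real.eulerMascheroniConstant := by
  by_contra hcon
  push Not at hcon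
  set γ := Real.eulerMascheroniConstant with hγ
  obtain ⟨c, hc⟩ : ∃ c, c = (K - γ) / 2 := ⟨_, rfl⟩
  have hc0 : 0 < c := by rw [hc]; linarith
  obtain ⟨m2, hm2⟩ := exists_nat_gt (3 / (2 * c))
  obtain ⟨m1, hm1⟩ : ∃ m1, m1 = max (max m0 m2) 1 := ⟨_, rfl⟩
  have hm10 : m0 ≤ m1 := by omega
  have hm12 : m2 ≤ m1 := by omega
  have hm11 : 1 ≤ m1 := by omega
  obtain ⟨d, hd⟩ : ∃ d : ℕ → ℝ, d = fun m => b m - (harmonic m : ℝ) - c := ⟨_, rfl⟩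
  have hdpos : ∀ m, m1 ≤ m → 0 ≤ d m := by
    intro m hm
    have h1 := hK m (by omega)
    have h2 := harm_ub m (by omega)
    have hmR : (0:ℝ) < m := by
      have : 0 < m := by omega
      exact_mod_cast this
    have h3 : 3 / (2 * c) < m := hm2.trans_le (by exact_mod_cast (hm12.trans hm))
    have h4 : 3 / (2 * (m:ℝ)) ≤ c := by
      rw [div_lt_iff₀ (by positivity)] at h3
      rw [div_le_iff₀ (by positivity)]; linarith
    have e1 : 1 / (m:ℝ) + 1 / (2 * m) = 3 / (2 * m) := by field_simp; norm_num
    rw [hd]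
    simp only
    linarith
  have hHmono : ∀ m, m ≤ m1 → (harmonic m : ℝ) ≤ harmonic m1 := by
    intro m hm
    have : harmonic m ≤ harmonic m1 := by
      unfold harmonic
      apply sum_le_sum_of_subset_of_nonneg
      · intro a ha; rw [mem_range] at *; omega
      · intros; positivity
    exact_mod_cast this
  obtain ⟨B, hB⟩ : ∃ B : ℝ, B = (harmonic m1 : ℝ) + c := ⟨_, rfl⟩
  have hB0 : 0 ≤ B := by
    have := hHmono 0 (by omega)
    rw [harmonic_zero, Rat.cast_zero] at this
    rw [hB]; linarith
  have hdB : ∀ m, m < m1 → -B ≤ d m := by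
    intro m hm
    have h1 := hHmono m hm.le
    have := hb m
    rw [hd, hB]; simp only; linarith
  have key : ∀ δ : ℝ, 0 < δ → c ≤ δ * (1 + B * m1) := by
    intro δ hδ
    obtain ⟨x, hx⟩ : ∃ x, x = Real.exp (-δ) := ⟨_, rfl⟩
    have hx0 : 0 < x := by rw [hx]; exact Real.exp_pos _
    have hx1 : x < 1 := by rw [hx]; exact Real.exp_lt_one_iff.mpr (by linarith)
    have hxd : 1 - x ≤ δ := by
      have := Real.add_one_le_exp (-δ)
      rw [hx]; linarith
    have fin : ∀ V, m1 ≤ V → ∑ m ∈ range V, x ^ (m+1) / ((m:ℝ)+1) ≤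
        Real.log (1 + 1/δ) - c + B * m1 * (1 - x) := by
      intro V hV
      have h1 := hS δ hδ V
      rw [← hx] at h1
      have h2 := abel_parts x d V
      have h3 : ∑ m ∈ range V, x ^ (m+1) * (b (m+1) - b m) =
          ∑ m ∈ range V, x ^ (m+1) / ((m:ℝ)+1) + ∑ m ∈ range V, x ^ (m+1) * (d (m+1) - d m) := by
        rw [← sum_add_distrib]
        apply sum_congr rfl
        intro m _
        rw [hd]
        simp only [harmonic_succ]
        push_cast
        field_simp
        ring
      have h4 : 0 ≤ x ^ V * d V := mul_nonneg (by positivity) (hdpos V hV)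
      have h5 : d 0 = -c := by rw [hd]; simp [b0]
      have hdx : ∀ m, 0 ≤ x ^ m - x ^ (m+1) := by
        intro m
        have : x ^ m - x ^ (m+1) = x ^ m * (1 - x) := by ring
        rw [this]; exact mul_nonneg (by positivity) (by linarith)
      have h6 : ∑ m ∈ range m1, d m * (x ^ m - x ^ (m+1)) ≤ ∑ m ∈ range V, d m * (x ^ m - x ^ (m+1)) := by
        apply sum_le_sum_of_subset_of_nonneg
        · intro a ha; rw [mem_range] at *; omega
        · intro m _ hm
          rw [mem_range] at hm
          exact mul_nonneg (hdpos m (by omega)) (hdx m)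
      have h7 : ∑ m ∈ range m1, (-B * (1 - x)) ≤ ∑ m ∈ range m1, d m * (x ^ m - x ^ (m+1)) := by
        apply sum_le_sum
        intro m hm
        rw [mem_range] at hm
        have i1 : -B * (x ^ m - x ^ (m+1)) ≤ d m * (x ^ m - x ^ (m+1)) :=
          mul_le_mul_of_nonneg_right (hdB m hm) (hdx m)
        have i2 : x ^ m - x ^ (m+1) ≤ 1 - x := by
          have : x ^ m - x ^ (m+1) = x ^ m * (1 - x) := by ring
          rw [this]
          have := pow_le_one₀ (n := m) hx0.le hx1.le
          nlinarith
        have i3 : B * (x ^ m - x ^ (m+1)) ≤ B * (1 - x) := mul_le_mul_of_nonneg_left i2 hB0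
        linarith
      rw [sum_const, card_range, nsmul_eq_mul] at h7
      linarith
    have hs := Real.hasSum_pow_div_log_of_abs_lt_one (x := x) (by rw [abs_of_pos hx0]; exact hx1)
    have hlim : -Real.log (1 - x) ≤ Real.log (1 + 1/δ) - c + B * m1 * (1 - x) := by
      refine le_of_tendsto hs.tendsto_sum_nat ?_
      filter_upwards [eventually_ge_atTop m1] with V hV
      exact fin V hV
    have h8 : Real.log (1 - x) ≤ Real.log δ := Real.log_le_log (by linarith) hxd
    have h9 : Real.log (1 + 1/δ) = Real.log (1 + δ) - Real.log δ := by
      rw [← Real.log_div (by linarith) hδ.ne']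
      congr 1; field_simp; ring
    have h10 : Real.log (1 + δ) ≤ δ := by
      have := Real.log_le_sub_one_of_pos (x := 1 + δ) (by linarith)
      linarith
    have h11 : B * m1 * (1 - x) ≤ B * m1 * δ := mul_le_mul_of_nonneg_left hxd (by positivity)
    linarith
  have hpos : 0 < 1 + B * m1 := by positivity
  have := key (c / (2 * (1 + B * m1))) (by positivity)
  have e : c / (2 * (1 + B * m1)) * (1 + B * m1) = c / 2 := by field_simp
  linarith

lemma K_le (K : ℝ) (m0 : ℕ) (hK : ∀ m : ℕ, m0 ≤ m → Real.log m - 1 / m + K ≤ bb m) :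
    K ≤ Real.eulerMascheroniConstant :=
  abel_arg bb bb_zero bb_nonneg (fun δ hδ V => (bb_S δ hδ V).trans (S_le δ hδ _)) K m0 hK

lemma Dm_le_bb (m : ℕ) (hm : 1 ≤ m) : Dm (Real.exp m) ≤ bb m := by
  unfold Dm DD bb
  have h0 : Icc 0 ⌊Real.exp m⌋₊ = insert 0 (Icc 1 ⌊Real.exp m⌋₊) := by
    ext a; simp; omega
  rw [h0, sum_insert (by simp)]
  simp only [ArithmeticFunction.map_zero, zero_mul, zero_add]
  apply sum_le_sum
  intro n _
  unfold aN
  have h1 : 0 ≤ ArithmeticFunction.vonMangoldt n := ArithmeticFunction.vonMangoldt_nonneg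
  apply mul_le_mul_of_nonneg_left _ h1
  have : 0 ≤ 1 / (Real.exp m * Real.log (Real.exp m)) := by
    rw [Real.log_exp]; positivity
  linarith

lemma log2_anti {y u : ℝ} (hy : 20 ≤ y) (hu : y ≤ u) : (Real.log u + 2) / u ≤ (Real.log y + 2) / y := by
  have hy0 : 0 < y := by linarith
  have hu0 : 0 < u := by linarith
  rw [div_le_div_iff₀ hu0 hy0]
  have h1 : Real.log u - Real.log y ≤ u / y - 1 := by
    rw [← Real.log_div hu0.ne' hy0.ne']
    exact Real.log_le_sub_one_of_pos (by positivity)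
  have h2 : 1 ≤ Real.log y + 2 := by
    have := Real.log_nonneg (x := y) (by linarith)
    linarith
  have h3 : y * (Real.log u - Real.log y) ≤ u - y := by
    have := mul_le_mul_of_nonneg_left h1 hy0.le
    have e : y * (u / y - 1) = u - y := by field_simp
    linarith
  nlinarith

lemma Dm_upper {y : ℝ} (hy : 20 ≤ y) :
    Dm y ≤ Real.log (Real.log y) - 1 / Real.log y + Real.eulerMascheroniConstant
      + ww y * (0.00749 + 16.6 * ((Real.log y + 2) / y)) := by
  obtain ⟨a, ha⟩ : ∃ a, a = -1.58124 - 8.3 * ((Real.log y + 2) / y) := ⟨_, rfl⟩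
  have hR : ∀ u, y ≤ u → Real.log u + a ≤ JJ u := by
    intro u hu
    have h1 := JJ_ge (x := u) (by linarith)
    have h2 := log2_anti hy hu
    rw [ha]; linarith
  have hw : 0 ≤ ww y := by
    unfold ww
    have := Real.log_nonneg (x := y) (by linarith)
    positivity
  have hJ := JJ_le hy
  have hfin : Dm y - Real.log (Real.log y) + 1 / Real.log y - ww y * (JJ y - Real.log y - a)
      ≤ Real.eulerMascheroniConstant := by
    obtain ⟨m0, hm0⟩ := exists_nat_gt (Real.log y)
    apply K_le _ (max m0 1)
    intro m hm
    have hm1 : 1 ≤ m := by omega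
    have hyz : y ≤ Real.exp m := by
      rw [← Real.exp_log (x := y) (by linarith)]
      apply Real.exp_le_exp.mpr
      have : (m0:ℝ) ≤ m := by exact_mod_cast (by omega : m0 ≤ m)
      linarith
    have h1 := Dm_mono a y (Real.exp m) (by linarith) hyz hR
    have h2 := Dm_le_bb m hm1
    rw [Real.log_exp] at h1
    linarith
  have h3 : ww y * (JJ y - Real.log y - a) ≤ ww y * (0.00749 + 16.6 * ((Real.log y + 2) / y)) := by
    apply mul_le_mul_of_nonneg_left _ hw
    rw [ha]; linarith
  linarith

end

section
open Finset Filter Topology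

lemma log_tail (q : ℝ) (h0 : 0 ≤ q) (h1 : q < 1) (J : ℕ) :
    - Real.log (1 - q) - ∑ k ∈ Icc 1 J, q ^ k / k ≤ q ^ (J+1) / ((J+1) * (1 - q)) := by
  have hs := Real.hasSum_pow_div_log_of_abs_lt_one (x := q) (by rw [abs_of_nonneg h0]; exact h1)
  have hs2 := (hasSum_nat_add_iff' J).mpr hs
  have hg := (hasSum_geometric_of_lt_one h0 h1).mul_left (q ^ (J+1) / ((J:ℝ)+1))
  have h3 := hasSum_le (fun i => ?_) hs2 hg
  · have e : Icc 1 J = Ico (0+1) (J+1) := by ext; simp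
    have e2 : ∑ k ∈ Icc 1 J, q ^ k / (k:ℝ) = ∑ i ∈ range J, q ^ (i+1) / ((i:ℝ)+1) := by
      rw [e, ← Finset.sum_Ico_add', ← Finset.range_eq_Ico]
      apply sum_congr rfl; intros; push_cast; rfl
    rw [e2]
    refine h3.trans (le_of_eq ?_)
    rw [← div_eq_mul_inv, div_div]
  · show q ^ (i + J + 1) / (((i + J : ℕ):ℝ) + 1) ≤ q ^ (J+1) / ((J:ℝ)+1) * q ^ i
    have e : q ^ (J+1) / ((J:ℝ)+1) * q ^ i = q ^ (i + J + 1) / ((J:ℝ)+1) := by ring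
    rw [e]
    apply div_le_div_of_nonneg_left (by positivity) (by positivity)
    push_cast
    have : (0:ℝ) ≤ i := by positivity
    linarith

noncomputable def gg (p : ℕ) : ℝ := - Real.log (1 - 1 / (p:ℝ))

lemma card_primes_le (s : ℕ) : (((Icc 1 s).filter Nat.Prime).card : ℝ) ≤ ((s:ℝ) + 1) / 2 := by
  have h : ((Icc 1 s).filter Nat.Prime).card ≤ (Icc 1 ((s+1)/2)).card := by
    apply card_le_card_of_injOn (fun p => (p+1)/2)
    · intro p hp
      simp only [coe_filter, mem_Icc, Set.mem_ofPred_eq, coe_Icc, Set.mem_Icc] at *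
      omega
    · intro p hp q hq hpq
      simp only [coe_filter, mem_Icc, Set.mem_ofPred_eq] at *
      rcases hp.2.eq_two_or_odd with h1 | h1 <;> rcases hq.2.eq_two_or_odd with h2 | h2
      · omega
      · have := hq.2.two_le; omega
      · have := hp.2.two_le; omega
      · omega
  rw [Nat.card_Icc] at h
  have h2 : 2 * ((Icc 1 s).filter Nat.Prime).card ≤ s + 1 := by omega
  have h3 : (2:ℝ) * ((Icc 1 s).filter Nat.Prime).card ≤ s + 1 := by exact_mod_cast h2
  linarith

lemma telesc (s N : ℕ) (hs : 1 ≤ s) :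
    ∑ n ∈ Ioc s N, 1 / (2 * (n:ℝ) * (n - 1)) ≤ 1 / (2 * s) := by
  rcases Nat.lt_or_ge N s with h | h
  · rw [Ioc_eq_empty (by omega)]; simp
  · have key : ∀ d : ℕ, ∑ n ∈ Ioc s (s+d), 1 / (2 * (n:ℝ) * (n - 1)) = 1 / (2 * s) - 1 / (2 * ((s + d : ℕ):ℝ)) := by
      intro d
      induction d with
      | zero => simp
      | succ d ih =>
        rw [← add_assoc, Finset.sum_Ioc_succ_top (by omega), ih]
        have h1 : (0:ℝ) < s := by exact_mod_cast hs
        have h2 : ((s:ℝ) + d) ≠ 0 := by positivity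
        have h3 : ((s:ℝ) + d + 1) ≠ 0 := by positivity
        push_cast
        have e : (s:ℝ) + d + 1 - 1 = s + d := by ring
        rw [e]
        field_simp
        ring
    obtain ⟨d, rfl⟩ := Nat.exists_eq_add_of_le h
    rw [key]
    have : (0:ℝ) ≤ 1 / (2 * ((s + d : ℕ):ℝ)) := by positivity
    linarith

lemma term_bound {y : ℝ} (hy : 1000 ≤ y) (p : ℕ) (hp : p.Prime) (hpN : p ≤ ⌊y⌋₊) :
    gg p - Real.log p / (y * Real.log y) -
      ∑ k ∈ Icc 1 (Nat.log p ⌊y⌋₊), (1 / ((k:ℝ) * p ^ k) - Real.log p / (y * Real.log y)) ≤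
    if p ≤ Nat.sqrt ⌊y⌋₊ then (7/6) / y else 1 / (2 * (p:ℝ) * (p - 1)) := by
  obtain ⟨N, hN⟩ : ∃ N, N = ⌊y⌋₊ := ⟨_, rfl⟩
  rw [← hN] at hpN ⊢
  have hy0 : 0 < y := by linarith
  have hL : 0 < Real.log y := Real.log_pos (by linarith)
  have hNy : (N:ℝ) ≤ y := by rw [hN]; exact Nat.floor_le hy0.le
  have hyN : y < N + 1 := by rw [hN]; exact Nat.lt_floor_add_one y
  obtain ⟨J, hJ⟩ : ∃ J, J = Nat.log p N := ⟨_, rfl⟩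
  rw [← hJ]
  have hp2 : (2:ℝ) ≤ p := by exact_mod_cast hp.two_le
  have hq0 : (0:ℝ) ≤ 1 / p := by positivity
  have hq1 : 1 / (p:ℝ) < 1 := by rw [div_lt_one (by linarith)]; linarith
  have ht := log_tail (1 / (p:ℝ)) hq0 hq1 J
  have hN0 : N ≠ 0 := by have := hp.pos; omega
  have hJ1 : 1 ≤ J := by
    rw [hJ]; exact Nat.log_pos hp.one_lt hpN
  have e1 : ∑ k ∈ Icc 1 J, (1 / ((k:ℝ) * p ^ k) - Real.log p / (y * Real.log y)) =
      ∑ k ∈ Icc 1 J, (1 / (p:ℝ)) ^ k / k - J * (Real.log p / (y * Real.log y)) := by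
    rw [sum_sub_distrib, sum_const, Nat.card_Icc, nsmul_eq_mul]
    simp only [Nat.add_sub_cancel]
    congr 1
    apply sum_congr rfl
    intro k _
    rw [div_pow, one_pow, div_div, mul_comm]
  rw [e1]
  have hgg : gg p - ∑ k ∈ Icc 1 J, (1 / (p:ℝ)) ^ k / k ≤ (1 / (p:ℝ)) ^ (J+1) / ((J+1) * (1 - 1 / p)) := ht
  split_ifs with hc
  · have hJ2 : 2 ≤ J := by
      rw [hJ]
      apply Nat.le_log_of_pow_le hp.one_lt
      rw [pow_two]; exact Nat.le_sqrt.mp hc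
    have hpow : (y:ℝ) ≤ (p:ℝ) ^ (J+1) := by
      have : N < p ^ (J+1) := by rw [hJ]; exact Nat.lt_pow_succ_log_self hp.one_lt N
      have h2 : ((N + 1 : ℕ):ℝ) ≤ ((p ^ (J+1) : ℕ) : ℝ) := by exact_mod_cast this
      push_cast at h2
      linarith
    have hJR : (2:ℝ) ≤ J := by exact_mod_cast hJ2
    have h1 : (1 / (p:ℝ)) ^ (J+1) / ((J+1) * (1 - 1 / p)) ≤ (1 / y) * (2 / (J+1)) := by
      rw [div_pow, one_pow, div_div]
      rw [div_mul_div_comm, one_mul]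
      rw [div_le_div_iff₀]
      · have hh : 1 / (p:ℝ) ≤ 1/2 := by
          apply div_le_div_of_nonneg_left <;> linarith
        have i1 : y * (1 / 2) ≤ (p:ℝ) ^ (J+1) * (1 - 1 / p) := by
          apply mul_le_mul hpow (by linarith) (by norm_num) (by positivity)
        have := mul_le_mul_of_nonneg_right i1 (by linarith : (0:ℝ) ≤ J + 1)
        linarith
      · have : 0 < 1 - 1 / (p:ℝ) := by linarith
        positivity
      · positivity
    have h2 : (J - 1) * (Real.log p / (y * Real.log y)) ≤ (1 / y) * ((J-1) / J) := by
      have hlp : J * Real.log p ≤ Real.log y := by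
        rw [← Real.log_pow]
        apply Real.log_le_log (by positivity)
        have : p ^ J ≤ N := Nat.pow_le_of_le_log hN0 (by omega)
        have h3 : ((p ^ J : ℕ):ℝ) ≤ N := by exact_mod_cast this
        push_cast at h3
        linarith
      have e : (1 / y) * (((J:ℝ)-1) / J) - (J - 1) * (Real.log p / (y * Real.log y)) =
          (J - 1) * (Real.log y - J * Real.log p) / (y * J * Real.log y) := by
        field_simp
      have : 0 ≤ ((J:ℝ) - 1) * (Real.log y - J * Real.log p) / (y * J * Real.log y) := by
        apply div_nonneg (mul_nonneg (by linarith) (by linarith)) (by positivity)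
      linarith
    have h3 : ((J:ℝ)-1) / J + 2 / (J+1) ≤ 7/6 := by
      have e : 7/6 - (((J:ℝ)-1) / J + 2 / (J+1)) = (J-2)*(J-3)/(6 * J * (J+1)) := by
        field_simp
        ring
      have : 0 ≤ ((J:ℝ)-2)*(J-3) := by
        rcases Nat.lt_or_ge J 3 with h | h
        · have : J = 2 := by omega
          rw [this]; norm_num
        · have : (3:ℝ) ≤ J := by exact_mod_cast h
          apply mul_nonneg <;> linarith
      have : 0 ≤ ((J:ℝ)-2)*(J-3)/(6 * J * (J+1)) := by positivity
      linarith
    have h4 := mul_le_mul_of_nonneg_left h3 (by positivity : 0 ≤ 1 / y)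
    have e4 : 1 / y * (7/6) = (7/6) / y := by ring
    linarith
  · have hJe : J = 1 := by
      have : J < 2 := by
        rw [hJ]
        apply Nat.log_lt_of_lt_pow hN0
        rw [pow_two]
        by_contra hh
        exact hc (Nat.le_sqrt.mpr (by omega))
      omega
    rw [hJe] at hgg ⊢
    have e : (1 / (p:ℝ)) ^ (1+1) / (((1:ℕ):ℝ)+1) / (1 - 1 / p) = 1 / (2 * (p:ℝ) * (p - 1)) := by
      have : (p:ℝ) - 1 ≠ 0 := by linarith
      push_cast
      field_simp
      norm_num
    rw [← div_div, e] at hgg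
    push_cast
    linarith

lemma prime_part {y : ℝ} (hy : 1000 ≤ y) :
    ∑ p ∈ (Icc 1 ⌊y⌋₊).filter Nat.Prime, (gg p - Real.log p / (y * Real.log y)) ≤
      Dm y + 1 / (2 * (√y - 1)) + (7/12) * (√y + 1) / y := by
  obtain ⟨N, hN⟩ : ∃ N, N = ⌊y⌋₊ := ⟨_, rfl⟩
  have hy0 : 0 < y := by linarith
  have hL : 0 < Real.log y := Real.log_pos (by linarith)
  have hD : Dm y = ∑ p ∈ (Icc 1 N).filter Nat.Prime,
      ∑ k ∈ Icc 1 (Nat.log p N), (1 / ((k:ℝ) * p ^ k) - Real.log p / (y * Real.log y)) := by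
    unfold Dm DD
    rw [← hN]
    have h0 : Icc 0 N = insert 0 (Icc 1 N) := by
      ext a; simp; omega
    rw [h0, sum_insert (by simp)]
    simp only [ArithmeticFunction.map_zero, zero_mul, zero_add]
    rw [pp_sum N (fun n => 1 / ((n:ℝ) * Real.log n) - 1 / (y * Real.log y))]
    apply sum_congr rfl
    intro p hp
    apply sum_congr rfl
    intro k hk
    rw [mem_Icc] at hk
    simp only [mem_filter, mem_Icc] at hp
    have hp1 : (1:ℝ) < p := by exact_mod_cast hp.2.one_lt
    have hl : 0 < Real.log p := Real.log_pos hp1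
    have hk0 : (0:ℝ) < k := by exact_mod_cast hk.1
    push_cast
    rw [Real.log_pow]
    field_simp
  have hmain : ∑ p ∈ (Icc 1 N).filter Nat.Prime, (gg p - Real.log p / (y * Real.log y)) - Dm y ≤
      ∑ p ∈ (Icc 1 N).filter Nat.Prime,
        if p ≤ Nat.sqrt N then (7/6) / y else 1 / (2 * (p:ℝ) * (p - 1)) := by
    rw [hD, ← sum_sub_distrib]
    apply sum_le_sum
    intro p hp
    simp only [mem_filter, mem_Icc] at hp
    rw [hN]
    exact term_bound hy p hp.2 (by rw [← hN]; exact hp.1.2)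
  obtain ⟨s, hs⟩ : ∃ s, s = Nat.sqrt N := ⟨_, rfl⟩
  rw [← hs] at hmain
  rw [sum_ite] at hmain
  have h1 : ∑ x ∈ ((Icc 1 N).filter Nat.Prime).filter (fun p => p ≤ s), (7/6) / y ≤
      (7/12) * (√y + 1) / y := by
    rw [sum_const, nsmul_eq_mul]
    have hc : ((((Icc 1 N).filter Nat.Prime).filter (fun p => p ≤ s)).card : ℝ) ≤ ((s:ℝ)+1)/2 := by
      refine le_trans ?_ (card_primes_le s)
      norm_cast
      apply card_le_card
      intro p hp
      simp only [mem_filter, mem_Icc] at hp ⊢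
      exact ⟨⟨hp.1.1.1, hp.2⟩, hp.1.2⟩
    have hsy : (s:ℝ) ≤ √y := by
      apply Real.le_sqrt_of_sq_le
      have : s ^ 2 ≤ N := by rw [hs, pow_two]; exact Nat.sqrt_le N
      have h2 : ((s^2 : ℕ):ℝ) ≤ N := by exact_mod_cast this
      push_cast at h2
      have hNy : (N:ℝ) ≤ y := by rw [hN]; exact Nat.floor_le hy0.le
      linarith
    have h3 := mul_le_mul_of_nonneg_right (hc.trans (by linarith : ((s:ℝ)+1)/2 ≤ (√y+1)/2))
      (by positivity : 0 ≤ (7/6) / y)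
    refine h3.trans (le_of_eq ?_)
    ring
  have hs1 : √y - 1 ≤ s := by
    have : N < (s+1)*(s+1) := by rw [hs]; exact Nat.lt_succ_sqrt N
    have h2 : y < ((s:ℝ)+1)^2 := by
      have hyN : y < N + 1 := by rw [hN]; exact Nat.lt_floor_add_one y
      have h2 : ((N + 1 : ℕ):ℝ) ≤ (((s+1)*(s+1) : ℕ):ℝ) := by exact_mod_cast this
      push_cast at h2
      linarith
    have := (Real.sqrt_lt' (by positivity)).mpr h2
    linarith
  have hsq : 31 ≤ √y := Real.le_sqrt_of_sq_le (by norm_num; linarith)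
  have hs0 : 1 ≤ s := by
    have : (1:ℝ) ≤ s := by linarith
    exact_mod_cast this
  have h2 : ∑ x ∈ ((Icc 1 N).filter Nat.Prime).filter (fun p => ¬ p ≤ s), 1 / (2 * (x:ℝ) * (x - 1)) ≤
      1 / (2 * (√y - 1)) := by
    calc _ ≤ ∑ n ∈ Ioc s N, 1 / (2 * (n:ℝ) * (n - 1)) := by
          apply sum_le_sum_of_subset_of_nonneg
          · intro p hp
            simp only [mem_filter, mem_Icc, mem_Ioc] at hp ⊢
            omega
          · intro n hn _
            rw [mem_Ioc] at hn
            have : (1:ℝ) ≤ n := by exact_mod_cast (by omega : 1 ≤ n)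
            have : 0 ≤ (n:ℝ) - 1 := by linarith
            positivity
      _ ≤ 1 / (2 * s) := telesc s N hs0
      _ ≤ _ := by
          apply div_le_div_of_nonneg_left <;> linarith
  rw [← hN]
  linarith

lemma log_ratio_eq (k : ℕ) (hk : 1 ≤ k) :
    Real.log (k / (Nat.totient k : ℝ)) = ∑ p ∈ k.primeFactors, gg p := by
  have h := Nat.totient_eq_mul_prod_factors k
  have h' : (Nat.totient k : ℝ) = k * ∏ p ∈ k.primeFactors, (1 - 1 / (p:ℝ)) := by
    have : ((Nat.totient k : ℚ) : ℝ) = ((k * ∏ p ∈ k.primeFactors, (1 - (p:ℚ)⁻¹) : ℚ) : ℝ) := by rw [h]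
    push_cast at this
    simpa using this
  have hk0 : (k:ℝ) ≠ 0 := by positivity
  rw [h', ← div_div, div_self hk0, one_div, Real.log_inv, Real.log_prod, ← sum_neg_distrib]
  · rfl
  · intro p hp
    have hp1 : (1:ℝ) < p := by exact_mod_cast (Nat.prime_of_mem_primeFactors hp).one_lt
    have hq1 : 1 / (p:ℝ) < 1 := by rw [div_lt_one (by linarith)]; linarith
    linarith

lemma large_part (k : ℕ) (hk : 1 ≤ k) (y : ℝ) (hy : y = Real.log k) (hy1 : 1000 ≤ y) :
    Real.log (k / (Nat.totient k : ℝ)) ≤ Dm y + 1 / (2 * (√y - 1)) + (7/12) * (√y + 1) / y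
      + y / ((y - 1) * Real.log y) := by
  rw [log_ratio_eq k hk]
  have hL : 0 < Real.log y := Real.log_pos (by linarith)
  refine le_trans ?_ (add_le_add_left (prime_part hy1) _)
  have hlog : ∑ p ∈ k.primeFactors, Real.log p ≤ y := by
    rw [← Real.log_prod]
    · rw [hy]
      apply Real.log_le_log
      · apply prod_pos
        intro p hp
        exact_mod_cast (Nat.prime_of_mem_primeFactors hp).pos
      · have := Nat.le_of_dvd hk (Nat.prod_primeFactors_dvd k)
        have h : ((∏ p ∈ k.primeFactors, p : ℕ):ℝ) ≤ k := Nat.cast_le.mpr this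
        rwa [Nat.cast_prod] at h
    · intro p hp
      exact_mod_cast (Nat.prime_of_mem_primeFactors hp).ne_zero
  have hmono : 1 / (y * Real.log y) ≤ 1 / ((y-1) * Real.log y) := by
    have : 0 < y - 1 := by linarith
    apply div_le_div_of_nonneg_left (by norm_num) (by positivity)
    nlinarith
  have h1 : ∀ p ∈ k.primeFactors, gg p ≤
      (if p ≤ ⌊y⌋₊ then gg p - Real.log p / (y * Real.log y) else 0) + Real.log p * (1 / ((y-1) * Real.log y)) := by
    intro p hp
    have hpp := Nat.prime_of_mem_primeFactors hp
    have hp1 : (1:ℝ) < p := by exact_mod_cast hpp.one_lt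
    have hl : 0 < Real.log p := Real.log_pos hp1
    split_ifs with hc
    · have := mul_le_mul_of_nonneg_left hmono hl.le
      rw [mul_one_div] at this
      linarith
    · push Not at hc
      have hyp : y < p := (Nat.floor_lt (by linarith)).mp hc
      have i1 : gg p ≤ 1 / ((p:ℝ) - 1) := by
        unfold gg
        rw [← Real.log_inv]
        have := Real.log_le_sub_one_of_pos (x := (1 - 1 / (p:ℝ))⁻¹) (by
          have hq1 : 1 / (p:ℝ) < 1 := by rw [div_lt_one (by linarith)]; linarith
          apply inv_pos.mpr; linarith)
        refine this.trans (le_of_eq ?_)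
        have : (p:ℝ) - 1 ≠ 0 := by linarith
        field_simp
        ring
      have i2 : Real.log y ≤ Real.log p := Real.log_le_log (by linarith) hyp.le
      have i3 : 1 / ((p:ℝ) - 1) ≤ Real.log p * (1 / ((y-1) * Real.log y)) := by
        have : 0 < y - 1 := by linarith
        have : 0 < (p:ℝ) - 1 := by linarith
        rw [mul_one_div, div_le_div_iff₀ (by positivity) (by positivity)]
        nlinarith
      linarith
  refine (sum_le_sum h1).trans ?_
  rw [sum_add_distrib, ← sum_mul, ← sum_filter]
  apply add_le_add
  · apply sum_le_sum_of_subset_of_nonneg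
    · intro p hp
      simp only [mem_filter, mem_Icc] at hp ⊢
      have := Nat.prime_of_mem_primeFactors hp.1
      exact ⟨⟨this.pos, hp.2⟩, this⟩
    · intro p hp _
      simp only [mem_filter, mem_Icc] at hp
      have hp1 : (1:ℝ) < p := by exact_mod_cast hp.2.one_lt
      have hpy : (p:ℝ) ≤ y := (Nat.le_floor_iff (by linarith)).mp hp.1.2
      have hl : 0 < Real.log p := Real.log_pos hp1
      have i1 : 1 / (p:ℝ) ≤ gg p := by
        unfold gg
        have hq1 : 1 / (p:ℝ) < 1 := by rw [div_lt_one (by linarith)]; linarith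
        have := Real.log_le_sub_one_of_pos (x := (1 - 1 / (p:ℝ))) (by linarith)
        linarith
      have i2 : Real.log p ≤ Real.log y := Real.log_le_log (by linarith) hpy
      have i3 : Real.log p / (y * Real.log y) ≤ 1 / p := by
        rw [div_le_div_iff₀ (by positivity) (by positivity)]
        nlinarith
      linarith
  · have : 0 < y - 1 := by linarith
    have := mul_le_mul_of_nonneg_right hlog (by positivity : 0 ≤ 1 / ((y-1) * Real.log y))
    exact this.trans (le_of_eq (mul_one_div _ _))

end

section
open Finset Filter Topology

def hzN : ℕ → ℕ
  | 0 => 0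
  | n+1 => hzN n + (10^12 / (n+1) + 1)
lemma hzN_ok (n : ℕ) : (harmonic n : ℝ) ≤ (hzN n : ℝ) / 10^12 := by
  induction n with
  | zero => simp [hzN]
  | succ n ih =>
    rw [harmonic_succ, hzN]
    have h : (10^12 : ℕ) ≤ (10^12/(n+1) + 1) * (n+1) := by
      have := Nat.lt_div_mul_add (a := 10^12) (b := n+1) (by omega)
      have e : (10^12/(n+1) + 1) * (n+1) = 10^12/(n+1) * (n+1) + (n+1) := by ring
      omega
    have h2 : ((10^12 : ℕ):ℝ) ≤ (((10^12/(n+1) + 1) * (n+1) : ℕ):ℝ) := Nat.cast_le.mpr h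
    have h3 : (((n:ℝ)+1))⁻¹ ≤ ((10^12/(n+1) + 1 : ℕ):ℝ) / 10^12 := by
      rw [inv_eq_one_div, div_le_div_iff₀ (by positivity) (by positivity), one_mul]
      rw [Nat.cast_mul, Nat.cast_pow] at h2
      push_cast at h2 ⊢
      exact h2
    rw [Rat.cast_add, Nat.cast_add (hzN n), add_div]
    refine add_le_add ih ?_
    push_cast at h3 ⊢
    exact h3
lemma hzN_181 : hzN 181 ≤ 5778472600000 := by decide +kernel

lemma gamma_gap : Real.eulerMascheroniConstant + 0.000014 ≤ Real.log 1.7811 := by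
  have h1 := harm_lb 181
  have h2 : ((harmonic 181 : ℚ) : ℝ) ≤ 5.7784726 := by
    have h := hzN_ok 181
    have h' : ((hzN 181 : ℕ) : ℝ) ≤ (5778472600000 : ℕ) := Nat.cast_le.mpr hzN_181
    refine h.trans ?_
    rw [div_le_iff₀ (by norm_num)]
    refine h'.trans ?_
    norm_num
  obtain ⟨H, hH⟩ : ∃ H : ℝ, H = ((harmonic 181 : ℚ) : ℝ) := ⟨_, rfl⟩
  rw [← hH] at h1 h2
  have h3 := (log_ratio 324 (1.7811 * 181.5) (by norm_num) (by norm_num)).2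
  rw [Real.log_mul (by norm_num) (by norm_num)] at h3
  have h4 : Real.log 324 = 2 * Real.log 18 := by
    rw [show (324:ℝ) = 18 ^ 2 by norm_num, Real.log_pow]; norm_num
  have h5 := log_bd_18.1
  have e : ((181:ℕ):ℝ) + 1/2 = 181.5 := by norm_num
  rw [e] at h1
  rw [h4] at h3
  norm_num at h3 h1 h2 h5 ⊢
  linarith

lemma exp9 : (8103:ℝ) ≤ Real.exp 9 := by
  have h := Real.exp_one_gt_d9
  have e : Real.exp 9 = Real.exp 1 ^ 9 := by
    rw [← Real.exp_nat_mul]; norm_num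
  rw [e]
  calc (8103:ℝ) ≤ 2.7182818283 ^ 9 := by norm_num
    _ ≤ _ := by gcongr

lemma r_bounds (L r : ℝ) (hL : 9 ≤ L) (hr : 0 < r) (h : r ^ 2 = Real.exp L) :
    90.01 ≤ r ∧ L ^ 3 ≤ 8.1 * r := by
  have h0 : r = Real.exp (L/2) := by
    have : r ^ 2 = Real.exp (L/2) ^ 2 := by
      rw [h, ← Real.exp_nat_mul]; congr 1; push_cast; ring
    exact (pow_left_inj₀ hr.le (Real.exp_pos _).le (by norm_num)).mp this
  have h45 : 90.01 ≤ Real.exp 4.5 := by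
    have e : Real.exp 9 = Real.exp 4.5 ^ 2 := by
      rw [← Real.exp_nat_mul]; norm_num
    have := exp9
    rw [e] at this
    have hp := Real.exp_pos 4.5
    by_contra hc
    push Not at hc
    nlinarith
  obtain ⟨t, ht⟩ : ∃ t, t = L - 9 := ⟨_, rfl⟩
  have hr2 : r = Real.exp 4.5 * Real.exp (t/2) := by
    rw [h0, ← Real.exp_add, ht]; congr 1; ring
  have h1 : L ^ 3 ≤ 729 * Real.exp (t/2) := by
    have e1 : t/9 + 1 ≤ Real.exp (t/9) := Real.add_one_le_exp _
    have e2 : (t/9+1)^3 ≤ Real.exp (t/9) ^ 3 := by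
      apply pow_le_pow_left₀ _ e1
      rw [ht]; linarith
    rw [← Real.exp_nat_mul] at e2
    have e3 : Real.exp ((3:ℕ) * (t/9)) ≤ Real.exp (t/2) := by
      apply Real.exp_le_exp.mpr
      push_cast
      rw [ht]; linarith
    have e4 : L ^ 3 = 729 * (t/9+1)^3 := by rw [ht]; ring
    rw [e4]; linarith
  have h2 : 1 ≤ Real.exp (t/2) := Real.one_le_exp (by rw [ht]; linarith)
  constructor
  · rw [hr2]; nlinarith
  · rw [hr2]; nlinarith

lemma poly_ineq (L : ℝ) (hL : 9 ≤ L) :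
    0.00749 * L^2 + 0.00749 * L + 10.92 ≤ 0.000014 * L^3 + 1.385 * L := by
  rcases le_total L 30 with h | h
  · nlinarith [mul_nonneg (sub_nonneg.mpr hL) (sub_nonneg.mpr h), pow_pos (by linarith : 0 < L) 3]
  · have h1 : 0 ≤ L * (L - 267.5)^2 := mul_nonneg (by linarith) (sq_nonneg _)
    nlinarith

lemma large_final (k : ℕ) (hk : 1 ≤ k) (hL : 9 ≤ Real.log (Real.log k)) :
    (k / (Nat.totient k : ℝ)) ≤ 1.7811 * Real.log (Real.log k) + 2.51 / Real.log (Real.log k) := by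
  obtain ⟨y, hy⟩ : ∃ y, y = Real.log k := ⟨_, rfl⟩
  obtain ⟨L, hLd⟩ : ∃ L, L = Real.log y := ⟨_, rfl⟩
  rw [← hy, ← hLd] at hL ⊢
  have hy0 : 0 < y := by
    rw [hy]
    have hnn : 0 ≤ Real.log k := Real.log_natCast_nonneg k
    rcases hnn.eq_or_lt with h | h
    · exfalso
      rw [hLd, hy, ← h] at hL
      simp at hL
      linarith
    · exact h
  have hyE : y = Real.exp L := by rw [hLd, Real.exp_log hy0]
  obtain ⟨r, hr⟩ : ∃ r, r = √y := ⟨_, rfl⟩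
  have hr0 : 0 < r := by rw [hr]; exact Real.sqrt_pos.mpr hy0
  have hr2 : r ^ 2 = y := by rw [hr]; exact Real.sq_sqrt hy0.le
  obtain ⟨hr90, hrL⟩ := r_bounds L r hL hr0 (by rw [hr2, hyE])
  have hy1000 : 1000 ≤ y := by rw [← hr2]; nlinarith
  have hA := large_part k hk y hy hy1000
  have hB := Dm_upper (y := y) (by linarith)
  rw [← hLd] at hA hB
  rw [← hr] at hA
  have hw : ww y = 1 / L + 1 / L ^ 2 := by rw [hLd]; rfl
  rw [hw] at hB
  have hL0 : 0 < L := by linarith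
  have hG := gamma_gap
  -- individual estimates
  have t1 : 1 / (2 * (r - 1)) ≤ 0.5057 / r := by
    rw [div_le_div_iff₀ (by linarith) hr0]; linarith
  have t2 : (7/12) * (r + 1) / y ≤ 0.5899 / r := by
    rw [← hr2, div_le_div_iff₀ (by positivity) hr0]; nlinarith
  have t3 : y / ((y - 1) * L) ≤ 1 / L + 0.00126 / r := by
    have e : y / ((y - 1) * L) = 1 / L + 1 / ((y-1) * L) := by
      have : y - 1 ≠ 0 := by linarith
      field_simp
      ring
    rw [e]
    have : 1 / ((y-1) * L) ≤ 0.00126 / r := by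
      have i1 : 89 * r ≤ y - 1 := by rw [← hr2]; nlinarith
      have i2 : 89 * r * 9 ≤ (y-1) * L := mul_le_mul i1 hL (by norm_num) (by linarith)
      rw [div_le_div_iff₀ (by nlinarith) hr0]
      linarith
    linarith
  have t4 : (1 / L + 1 / L ^ 2) * (16.6 * ((L + 2) / y)) ≤ 0.2506 / r := by
    have i1 : 1 / L + 1 / L ^ 2 ≤ (10/9) / L := by
      rw [div_add_div _ _ hL0.ne' (by positivity), div_le_div_iff₀ (by positivity) hL0]
      nlinarith [pow_pos hL0 3]
    have i2 : (L + 2) / y ≤ ((11/9) * L) / (90 * r) := by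
      apply div_le_div₀ (by positivity) (by linarith) (by positivity)
      rw [← hr2]; nlinarith
    calc (1 / L + 1 / L ^ 2) * (16.6 * ((L + 2) / y)) ≤ ((10/9) / L) * (16.6 * (((11/9) * L) / (90 * r))) := by
          gcongr
      _ = (16.6 * (10/9) * (11/9) / 90) / r := by field_simp
      _ ≤ _ := by
          apply div_le_div_of_nonneg_right _ hr0.le
          norm_num
  have t5 : (0.5057 + 0.5899 + 0.00126 + 0.2506) / r ≤ 10.92 / L ^ 3 := by
    rw [div_le_div_iff₀ hr0 (by positivity)]
    linarith
  have t6 : (1 / L + 1 / L ^ 2) * 0.00749 + 10.92 / L ^ 3 ≤ 0.000014 + 1.385 / L ^ 2 := by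
    have e : 0.000014 + 1.385 / L ^ 2 - ((1 / L + 1 / L ^ 2) * 0.00749 + 10.92 / L ^ 3) =
        (0.000014 * L^3 + 1.385 * L - (0.00749 * L^2 + 0.00749 * L + 10.92)) / L ^ 3 := by
      field_simp
    have := div_nonneg (sub_nonneg.mpr (poly_ineq L hL)) (by positivity : 0 ≤ L ^ 3)
    linarith
  have hz : 1.385 / L ^ 2 ≤ Real.log (1 + 2.51 / (1.7811 * L ^ 2)) := by
    have i1 := Real.one_sub_inv_le_log_of_pos (x := 1 + 2.51 / (1.7811 * L ^ 2)) (by positivity)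
    refine le_trans ?_ i1
    have e : 1 - (1 + 2.51 / (1.7811 * L ^ 2))⁻¹ = 2.51 / (1.7811 * L ^ 2 + 2.51) := by
      field_simp
      ring
    rw [e, div_le_div_iff₀ (by positivity) (by positivity)]
    nlinarith
  have e5 : (0.5057 + 0.5899 + 0.00126 + 0.2506) / r = 0.5057 / r + 0.5899 / r + 0.00126 / r + 0.2506 / r := by
    ring
  have hfin : Real.log (k / (Nat.totient k : ℝ)) ≤ Real.log (1.7811 * L + 2.51 / L) := by
    have e : 1.7811 * L + 2.51 / L = 1.7811 * L * (1 + 2.51 / (1.7811 * L ^ 2)) := by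
      field_simp
    rw [e, Real.log_mul (by positivity) (by positivity), Real.log_mul (by norm_num) hL0.ne']
    have e7 : (1 / L + 1 / L ^ 2) * (0.00749 + 16.6 * ((L + 2) / y)) =
      (1 / L + 1 / L ^ 2) * 0.00749 + (1 / L + 1 / L ^ 2) * (16.6 * ((L + 2) / y)) := by ring
    linarith
  have hφ : 0 < Nat.totient k := Nat.totient_pos.mpr hk
  exact (Real.log_le_log_iff (by positivity) (by positivity)).mp hfin

end

section
open Finset

/-! ### Fast prime test -/

def smallPs : List ℕ := [2,3,5,7,11,13,17,19,23,29,31,37,41,43,47,53,59,61,67,71,73,79,83,89,97,101,103,107,109,113,127]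

def bigP : ℕ := 4014476939333036189094441199026045136645885247730

def isP (n : ℕ) : Bool :=
  bif Nat.ble n 127 then smallPs.any (fun m => Nat.beq m n) else Nat.beq (Nat.gcd n bigP) 1

lemma bigP_eq : bigP = smallPs.prod := by decide +kernel

lemma smallPs_prime : ∀ m ∈ smallPs, m.Prime := by
  intro m hm
  simp only [smallPs, List.mem_cons, List.not_mem_nil, or_false] at hm
  rcases hm with rfl|rfl|rfl|rfl|rfl|rfl|rfl|rfl|rfl|rfl|rfl|rfl|rfl|rfl|rfl|rfl|rfl|rfl|rfl|rfl|rfl|rfl|rfl|rfl|rfl|rfl|rfl|rfl|rfl|rfl|rfl <;> norm_num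

lemma smallPs_le : ∀ m ∈ smallPs, m ≤ 127 := by decide

lemma prime_small (n : ℕ) (hn : n ≤ 130) (h : n.Prime) : n ∈ smallPs := by
  by_contra hc
  interval_cases n <;> first | (exact hc (by decide)) | (revert h; norm_num)

lemma isP_iff (n : ℕ) (hn : n < 17161) : isP n = true ↔ n.Prime := by
  unfold isP
  by_cases h : n ≤ 127
  · rw [Nat.ble_eq_true_of_le h, cond_true, List.any_eq_true]
    constructor
    · rintro ⟨m, hm, he⟩
      have : m = n := Nat.eq_of_beq_eq_true he
      rw [← this]; exact smallPs_prime m hm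
    · intro hp
      exact ⟨n, prime_small n (by omega) hp, Nat.beq_refl n⟩
  · have hb : Nat.ble n 127 = false := by
      rw [← Bool.not_eq_true]
      intro hh; exact h (Nat.le_of_ble_eq_true hh)
    rw [hb, cond_false]
    constructor
    · intro he
      have hg : Nat.gcd n bigP = 1 := Nat.eq_of_beq_eq_true he
      by_contra hnp
      have h1 := Nat.minFac_sq_le_self (n := n) (by omega) hnp
      have hmp : n.minFac.Prime := Nat.minFac_prime (by omega)
      have h2 : n.minFac ≤ 130 := by
        by_contra hc
        push Not at hc
        nlinarith
      have h3 := prime_small _ h2 hmp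
      have h4 : n.minFac ∣ bigP := by rw [bigP_eq]; exact List.dvd_prod h3
      have h5 := Nat.dvd_gcd (Nat.minFac_dvd n) h4
      rw [hg] at h5
      exact hmp.one_lt.ne' (Nat.dvd_one.mp h5)
    · intro hp
      have : Nat.gcd n bigP = 1 := by
        rw [← Nat.coprime_iff_gcd_eq_one, hp.coprime_iff_not_dvd, bigP_eq]
        intro hd
        obtain ⟨m, hm, hdm⟩ := (Prime.dvd_prod_iff hp.prime).mp hd
        have h1 := Nat.le_of_dvd (smallPs_prime m hm).pos hdm
        have h2 := smallPs_le m hm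
        omega
      rw [this]; rfl

def segP (g : ℕ → ℕ) : ℕ → ℕ → ℕ
  | 0, a => bif isP a then g a else 1
  | j+1, a => segP g j a * segP g j (a + 2^j)

lemma segP_eq (g : ℕ → ℕ) (j a : ℕ) (h : a + 2^j ≤ 17161) :
    segP g j a = ∏ n ∈ Ico a (a + 2^j), if n.Prime then g n else 1 := by
  induction j generalizing a with
  | zero =>
    have := isP_iff a (by rw [pow_zero] at h; omega)
    simp only [segP, pow_zero, Nat.Ico_succ_singleton, prod_singleton]
    by_cases hp : a.Prime
    · rw [this.mpr hp, if_pos hp, cond_true]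
    · have hf : isP a = false := by rw [← Bool.not_eq_true, this]; exact hp
      rw [hf, if_neg hp, cond_false]
  | succ j ih =>
    have e : a + 2^(j+1) = a + 2^j + 2^j := by rw [pow_succ]; omega
    have h2 : 0 < 2^j := by positivity
    rw [e] at h
    rw [segP, ih a (by omega), ih (a + 2^j) (by omega), e]
    exact prod_Ico_consecutive _ (by omega) (by omega)

def TT (Q : ℕ) : Finset ℕ := (range (Q+1)).filter Nat.Prime

def segQ (g : ℕ → ℕ) (d Q : ℕ) : ℕ := segP (fun p => bif Nat.ble p Q then g p else 1) d 0

lemma segQ_eq (g : ℕ → ℕ) (d Q : ℕ) (hd : d ≤ 14) (hQ : Q < 2^d) :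
    segQ g d Q = ∏ p ∈ TT Q, g p := by
  have h14 : 2^d ≤ 2^14 := Nat.pow_le_pow_right (by norm_num) hd
  unfold segQ
  rw [segP_eq _ _ _ (by omega), zero_add, TT, prod_filter, ← range_eq_Ico]
  have hsub : range (Q+1) ⊆ range (2^d) := by
    intro x hx; rw [mem_range] at *; omega
  have : ∀ n, (if n.Prime then (bif Nat.ble n Q then g n else 1) else 1) =
      if n ≤ Q then (if n.Prime then g n else 1) else 1 := by
    intro n
    by_cases h : n ≤ Q
    · rw [Nat.ble_eq_true_of_le h, if_pos h, cond_true]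
    · have hb : Nat.ble n Q = false := by
        rw [← Bool.not_eq_true]
        intro hh; exact h (Nat.le_of_ble_eq_true hh)
      rw [hb, if_neg h, cond_false]; simp
  simp only [this]
  rw [← prod_subset hsub]
  · apply prod_congr rfl
    intro n hn
    rw [mem_range] at hn
    rw [if_pos (by omega)]
  · intro n _ hn
    rw [mem_range] at hn
    rw [if_neg (by omega)]

/-! ### Exchange -/

lemma exchange (S T : Finset ℕ) (g : ℕ → ℝ) (B : ℝ) (hB : 1 ≤ B) (hg : ∀ p ∈ S ∪ T, 0 < g p)
    (h1 : ∀ p ∈ T \ S, g p ≤ B) (h2 : ∀ p ∈ S \ T, B ≤ g p) (hc : T.card ≤ S.card) :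
    ∏ p ∈ T, g p ≤ ∏ p ∈ S, g p := by
  rw [← prod_inter_mul_prod_sdiff T S g, ← prod_inter_mul_prod_sdiff S T g, inter_comm T S]
  have c1 := card_sdiff_add_card_inter T S
  have c2 := card_sdiff_add_card_inter S T
  rw [inter_comm T S] at c1
  apply mul_le_mul_of_nonneg_left
  · calc ∏ p ∈ T \ S, g p ≤ ∏ _p ∈ T \ S, B := by
          apply prod_le_prod
          · intro p hp
            exact (hg p (mem_union_right _ (mem_sdiff.mp hp).1)).le
          · exact h1
      _ = B ^ (T \ S).card := by rw [prod_const]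
      _ ≤ B ^ (S \ T).card := pow_le_pow_right₀ hB (by omega)
      _ = ∏ _p ∈ S \ T, B := by rw [prod_const]
      _ ≤ _ := by
          apply prod_le_prod
          · intros; linarith
          · exact h2
  · apply prod_nonneg
    intro p hp
    exact (hg p (mem_union_left _ (mem_inter.mp hp).1)).le

lemma mem_TT {Q p : ℕ} : p ∈ TT Q ↔ p ≤ Q ∧ p.Prime := by
  simp [TT]

lemma k_ge (k Q : ℕ) (hk : 1 ≤ k) (hQ : 1 ≤ Q) (hc : (TT Q).card ≤ k.primeFactors.card) :
    ((∏ p ∈ TT Q, p : ℕ) : ℝ) ≤ k := by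
  have h1 : ((∏ p ∈ k.primeFactors, p : ℕ):ℝ) ≤ k :=
    Nat.cast_le.mpr (Nat.le_of_dvd hk (Nat.prod_primeFactors_dvd k))
  refine le_trans ?_ h1
  rw [Nat.cast_prod, Nat.cast_prod]
  apply exchange k.primeFactors (TT Q) (fun p => (p:ℝ)) Q (by exact_mod_cast hQ) _ _ _ hc
  · intro p hp
    rcases mem_union.mp hp with h | h
    · exact_mod_cast (Nat.prime_of_mem_primeFactors h).pos
    · exact_mod_cast (mem_TT.mp h).2.pos
  · intro p hp
    exact_mod_cast (mem_TT.mp (mem_sdiff.mp hp).1).1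
  · intro p hp
    rw [mem_sdiff] at hp
    have hpp := Nat.prime_of_mem_primeFactors hp.1
    have : Q ≤ p := by
      by_contra hcc
      exact hp.2 (mem_TT.mpr ⟨by omega, hpp⟩)
    exact_mod_cast this

lemma rho_anti {a b : ℝ} (ha : 1 < a) (hab : a ≤ b) : b / (b - 1) ≤ a / (a - 1) := by
  rw [div_le_div_iff₀ (by linarith) (by linarith)]
  nlinarith

lemma ratio_le (k Q : ℕ) (hk : 1 ≤ k) (hQ : 2 ≤ Q) (hc : k.primeFactors.card ≤ (TT Q).card) :
    (k / (Nat.totient k : ℝ)) ≤ ∏ p ∈ TT Q, (p:ℝ) / (p - 1) := by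
  have h' : (k / (Nat.totient k : ℝ)) = ∏ p ∈ k.primeFactors, (p:ℝ) / (p - 1) := by
    have h := Nat.totient_mul_prod_primeFactors k
    have h2 : ((Nat.totient k * ∏ p ∈ k.primeFactors, p : ℕ):ℝ) = ((k * ∏ p ∈ k.primeFactors, (p - 1) : ℕ):ℝ) := by
      rw [h]
    rw [Nat.cast_mul, Nat.cast_mul, Nat.cast_prod, Nat.cast_prod] at h2
    rw [prod_div_distrib]
    have h3 : ∏ p ∈ k.primeFactors, ((p - 1 : ℕ):ℝ) = ∏ p ∈ k.primeFactors, ((p:ℝ) - 1) := by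
      apply prod_congr rfl
      intro p hp
      rw [Nat.cast_sub (Nat.prime_of_mem_primeFactors hp).one_le]; simp
    rw [h3] at h2
    have h4 : 0 < ∏ p ∈ k.primeFactors, ((p:ℝ) - 1) := by
      apply prod_pos
      intro p hp
      have : (1:ℝ) < p := by exact_mod_cast (Nat.prime_of_mem_primeFactors hp).one_lt
      linarith
    have h5 : (0:ℝ) < Nat.totient k := by exact_mod_cast Nat.totient_pos.mpr hk
    rw [div_eq_div_iff h5.ne' h4.ne']
    linarith
  rw [h']
  have hQ' : (2:ℝ) ≤ Q := by exact_mod_cast hQ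
  have hpr : ∀ p : ℕ, p.Prime → (1:ℝ) < p := fun p hp => by exact_mod_cast hp.one_lt
  apply exchange (TT Q) k.primeFactors (fun p => (p:ℝ) / (p - 1)) ((Q:ℝ)/(Q-1)) _ _ _ _ hc
  · rw [le_div_iff₀ (by linarith)]; linarith
  · intro p hp
    have : p.Prime := by
      rcases mem_union.mp hp with h | h
      · exact (mem_TT.mp h).2
      · exact Nat.prime_of_mem_primeFactors h
    have := hpr p this
    have : 0 < (p:ℝ) - 1 := by linarith
    positivity
  · intro p hp
    rw [mem_sdiff] at hp
    have hpp := Nat.prime_of_mem_primeFactors hp.1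
    have : Q ≤ p := by
      by_contra hcc
      exact hp.2 (mem_TT.mpr ⟨by omega, hpp⟩)
    exact rho_anti (by linarith) (by exact_mod_cast this)
  · intro p hp
    have h := mem_TT.mp (mem_sdiff.mp hp).1
    exact rho_anti (hpr p h.2) (by exact_mod_cast h.1)

/-! ### Checks -/

structure Stp where
  Q : ℕ
  Q' : ℕ
  d : ℕ
  a : ℕ
  s : ℕ
  q : ℕ
  j : ℕ

def chkS (t : Stp) : Bool :=
  Nat.ble t.d 14 && Nat.ble (t.Q'+1) (2^t.d) && Nat.ble (t.Q+1) (2^t.d) && Nat.ble 2 t.Q && Nat.ble 2 t.Q'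
  && Nat.ble 1 t.s && Nat.ble 1 t.q && Nat.ble (119 * t.q) (100 * t.j)
  && Nat.ble (2^t.a) ((segQ id t.d t.Q)^t.s)
  && Nat.ble ((2*t.q^3+2*t.q^2+t.q+2)^t.j * (t.s * 1000000)) (t.a * 693147 * (2*t.q^3)^t.j)
  && Nat.ble (segQ id t.d t.Q' * (10000 * t.q * t.j)) (segQ Nat.pred t.d t.Q' * (17811 * t.j^2 + 25100 * t.q^2))

lemma ff_mono {a b : ℝ} (ha : 1.19 ≤ a) (hab : a ≤ b) : 1.7811 * a + 2.51 / a ≤ 1.7811 * b + 2.51 / b := by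
  have ha0 : 0 < a := by linarith
  have hb0 : 0 < b := by linarith
  have e : 1.7811 * b + 2.51 / b - (1.7811 * a + 2.51 / a) = (b - a) * (1.7811 * (a * b) - 2.51) / (a * b) := by
    field_simp
    ring
  have : 0 ≤ (b - a) * (1.7811 * (a * b) - 2.51) / (a * b) := by
    apply div_nonneg (mul_nonneg (by linarith) _) (by positivity)
    nlinarith
  linarith

lemma exp_step (q : ℕ) (hq : 1 ≤ q) (j : ℕ) :
    Real.exp ((j:ℝ)/q) ≤ ((2*(q:ℝ)^3+2*q^2+q+2) / (2*q^3))^j := by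
  have hq' : (1:ℝ) ≤ q := by exact_mod_cast hq
  have e : Real.exp ((j:ℝ)/q) = Real.exp (1/(q:ℝ))^j := by
    rw [← Real.exp_nat_mul]; congr 1; ring
  rw [e]
  apply pow_le_pow_left₀ (Real.exp_pos _).le
  have h := Real.exp_bound' (x := 1/(q:ℝ)) (by positivity) (by rw [div_le_one (by linarith)]; exact hq') (n := 3) (by norm_num)
  refine h.trans ?_
  simp only [sum_range_succ, sum_range_zero]
  have e2 : (2*(q:ℝ)^3+2*q^2+q+2) / (2*q^3) = 1 + 1/q + (1/(q:ℝ))^2/2 + (1/(q:ℝ))^3 := by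
    field_simp
  rw [e2]
  have : 0 ≤ (1/(q:ℝ))^3 := by positivity
  norm_num [Nat.factorial] at ⊢
  rw [one_div, inv_pow] at this
  linarith

lemma loglog_ge (k N a s q j : ℕ) (hs : 1 ≤ s) (hq : 1 ≤ q) (hNk : (N:ℝ) ≤ k) (h1 : 2^a ≤ N^s)
    (h2 : (2*q^3+2*q^2+q+2)^j * (s * 1000000) ≤ a * 693147 * (2*q^3)^j) :
    (j:ℝ)/q ≤ Real.log (Real.log k) := by
  have hN0 : 0 < N := by
    rcases Nat.eq_zero_or_pos N with h | h
    · rw [h, zero_pow (by omega)] at h1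
      have := pow_pos (by norm_num : 0 < 2) a
      omega
    · exact h
  have hN : (0:ℝ) < N := by exact_mod_cast hN0
  have hsR : (0:ℝ) < s := by exact_mod_cast hs
  have hqR : (0:ℝ) < q := by exact_mod_cast hq
  have i1 : a * Real.log 2 ≤ s * Real.log N := by
    rw [← Real.log_pow, ← Real.log_pow]
    apply Real.log_le_log (by positivity)
    exact_mod_cast h1
  have i2 : Real.log N ≤ Real.log k := Real.log_le_log hN hNk
  have i3 := Real.log_two_gt_d9
  have i4 : (a:ℝ) * 0.693147 ≤ s * Real.log k := by
    have : (a:ℝ) * 0.693147 ≤ a * Real.log 2 := by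
      apply mul_le_mul_of_nonneg_left _ (by positivity); linarith
    have := mul_le_mul_of_nonneg_left i2 hsR.le
    linarith
  have i5 : ((2*(q:ℝ)^3+2*q^2+q+2)^j * (s * 1000000)) ≤ a * 693147 * (2*q^3)^j := by exact_mod_cast h2
  have i6 : ((2*(q:ℝ)^3+2*q^2+q+2) / (2*q^3))^j ≤ Real.log k := by
    rw [div_pow, div_le_iff₀ (by positivity)]
    have i7 := mul_le_mul_of_nonneg_right i4 (by positivity : 0 ≤ (2*(q:ℝ)^3)^j)
    have i8 : s * (2*(q:ℝ)^3+2*q^2+q+2)^j ≤ s * (Real.log k * (2*q^3)^j) := by linarith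
    exact le_of_mul_le_mul_left i8 hsR
  have i9 := (exp_step q hq j).trans i6
  rw [Real.le_log_iff_exp_le (lt_of_lt_of_le (Real.exp_pos _) i9)]
  exact i9

lemma chkS_sound (t : Stp) (ht : chkS t = true) (k : ℕ) (hk : 1 ≤ k)
    (h1 : (TT t.Q).card ≤ k.primeFactors.card) (h2 : k.primeFactors.card ≤ (TT t.Q').card) :
    (k / (Nat.totient k : ℝ)) ≤ 1.7811 * Real.log (Real.log k) + 2.51 / Real.log (Real.log k) := by
  obtain ⟨Q, Q', d, a, s, q, j⟩ := t
  simp only [chkS, Bool.and_eq_true, Nat.ble_eq] at ht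
  simp only at h1 h2
  obtain ⟨⟨⟨⟨⟨⟨⟨⟨⟨⟨c1, c2⟩, c3⟩, c4⟩, c5⟩, c6⟩, c7⟩, c8⟩, c9⟩, c10⟩, c11⟩ := ht
  rw [segQ_eq _ _ _ c1 (by omega)] at c9
  rw [segQ_eq _ _ _ c1 (by omega), segQ_eq _ _ _ c1 (by omega)] at c11
  have hk1 := k_ge k Q hk (by omega) h1
  have hl := loglog_ge k (∏ p ∈ TT Q, p) a s q j c6 c7 hk1 c9 c10
  have hqR : (0:ℝ) < q := by exact_mod_cast c7
  have c8R : 119 * (q:ℝ) ≤ 100 * j := by exact_mod_cast c8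
  have h119 : 1.19 ≤ (j:ℝ)/q := by
    rw [le_div_iff₀ hqR]; linarith
  have hj0 : (0:ℝ) < j := by linarith
  refine (ratio_le k Q' hk c5 h2).trans (le_trans ?_ (ff_mono h119 hl))
  have c11R : ((∏ p ∈ TT Q', id p : ℕ):ℝ) * (10000 * q * j) ≤ ((∏ p ∈ TT Q', Nat.pred p : ℕ):ℝ) * (17811 * j^2 + 25100 * q^2) := by
    exact_mod_cast c11
  rw [Nat.cast_prod, Nat.cast_prod] at c11R
  have e3 : ∏ p ∈ TT Q', ((Nat.pred p : ℕ):ℝ) = ∏ p ∈ TT Q', ((p:ℝ) - 1) := by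
    apply prod_congr rfl
    intro p hp
    rw [Nat.pred_eq_sub_one, Nat.cast_sub (mem_TT.mp hp).2.one_le]; simp
  rw [e3] at c11R
  simp only [id] at c11R
  have h4 : 0 < ∏ p ∈ TT Q', ((p:ℝ) - 1) := by
    apply prod_pos
    intro p hp
    have : (1:ℝ) < p := by exact_mod_cast (mem_TT.mp hp).2.one_lt
    linarith
  rw [prod_div_distrib, div_le_iff₀ h4]
  have e : (1.7811 * ((j:ℝ)/q) + 2.51 / ((j:ℝ)/q)) = (17811 * j^2 + 25100 * q^2) / (10000 * q * j) := by
    field_simp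
    ring
  rw [e, div_mul_eq_mul_div, le_div_iff₀ (by positivity)]
  linarith

/-- consecutive steps fit together -/
def chkC (R : ℕ) : Stp → List Stp → Bool
  | t, [] => chkS t && Nat.beq t.Q' R
  | t, u :: l => chkS t && Nat.ble (t.Q'+1) (2^u.d) &&
      Nat.ble (segQ (fun _ => 2) u.d u.Q) (2 * segQ (fun _ => 2) u.d t.Q') && chkC R u l

lemma chkC_sound (R : ℕ) (k : ℕ) (hk : 1 ≤ k) (l : List Stp) : ∀ t : Stp, chkC R t l = true →
    (TT t.Q).card ≤ k.primeFactors.card →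
    (k / (Nat.totient k : ℝ)) ≤ 1.7811 * Real.log (Real.log k) + 2.51 / Real.log (Real.log k)
    ∨ (TT R).card < k.primeFactors.card := by
  induction l with
  | nil =>
    intro t ht h1
    simp only [chkC, Bool.and_eq_true] at ht
    have hR := Nat.eq_of_beq_eq_true ht.2
    rcases Nat.lt_or_ge (TT t.Q').card k.primeFactors.card with h | h
    · right; rw [← hR]; exact h
    · left; exact chkS_sound t ht.1 k hk h1 h
  | cons u l ih =>
    intro t ht h1
    simp only [chkC, Bool.and_eq_true] at ht
    obtain ⟨⟨⟨h2, h3⟩, h4⟩, h5⟩ := ht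
    rcases Nat.lt_or_ge (TT t.Q').card k.primeFactors.card with h | h
    · apply ih u h5
      have h6 : chkS u = true := by
        cases l <;> simp only [chkC, Bool.and_eq_true] at h5
        · exact h5.1
        · exact h5.1.1.1
      simp only [chkS, Bool.and_eq_true, Nat.ble_eq] at h6
      rw [Nat.ble_eq] at h3 h4
      rw [segQ_eq _ _ _ (by tauto) (by omega), segQ_eq _ _ _ (by tauto) (by omega)] at h4
      rw [prod_const, prod_const, ← pow_succ'] at h4
      have := (Nat.pow_le_pow_iff_right (by norm_num)).mp h4
      omega
    · left; exact chkS_sound t h2 k hk h1 h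

end

section
open Finset

def steps : List Stp := [
  ⟨11, 11, 4, 223, 20, 256, 523⟩,
  ⟨13, 13, 4, 297, 20, 256, 596⟩,
  ⟨17, 17, 5, 379, 20, 256, 659⟩,
  ⟨19, 19, 5, 464, 20, 256, 711⟩,
  ⟨23, 23, 5, 11093, 400, 4096, 12108⟩,
  ⟨29, 29, 5, 651, 20, 256, 797⟩,
  ⟨31, 31, 5, 750, 20, 256, 833⟩,
  ⟨37, 37, 6, 855, 20, 256, 867⟩,
  ⟨41, 41, 6, 962, 20, 256, 897⟩,
  ⟨43, 43, 6, 1070, 20, 256, 924⟩,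
  ⟨47, 47, 6, 1181, 20, 256, 950⟩,
  ⟨53, 53, 6, 1296, 20, 256, 974⟩,
  ⟨59, 59, 6, 1414, 20, 256, 996⟩,
  ⟨61, 61, 6, 1532, 20, 256, 1016⟩,
  ⟨67, 71, 7, 1654, 20, 256, 1036⟩,
  ⟨73, 79, 7, 95, 1, 128, 535⟩,
  ⟨83, 89, 7, 107, 1, 128, 551⟩,
  ⟨97, 101, 7, 120, 1, 128, 565⟩,
  ⟨103, 107, 7, 134, 1, 128, 579⟩,
  ⟨109, 113, 7, 147, 1, 128, 591⟩,
  ⟨127, 137, 8, 161, 1, 128, 603⟩,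
  ⟨139, 151, 8, 182, 1, 128, 619⟩,
  ⟨157, 167, 8, 204, 1, 128, 633⟩,
  ⟨173, 191, 8, 226, 1, 128, 646⟩,
  ⟨193, 211, 8, 256, 1, 128, 662⟩,
  ⟨223, 239, 8, 287, 1, 128, 677⟩,
  ⟨241, 269, 9, 326, 1, 128, 693⟩,
  ⟨271, 307, 9, 367, 1, 128, 708⟩,
  ⟨311, 349, 9, 416, 1, 128, 724⟩,
  ⟨353, 397, 9, 474, 1, 128, 741⟩,
  ⟨401, 449, 9, 543, 1, 128, 759⟩,
  ⟨457, 509, 9, 622, 1, 128, 776⟩,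
  ⟨521, 593, 10, 711, 1, 128, 793⟩,
  ⟨599, 661, 10, 812, 1, 128, 810⟩,
  ⟨673, 761, 10, 933, 1, 128, 828⟩,
  ⟨769, 877, 10, 1066, 1, 128, 845⟩,
  ⟨881, 1009, 10, 1221, 1, 128, 862⟩,
  ⟨1013, 1151, 11, 1399, 1, 128, 880⟩,
  ⟨1153, 1303, 11, 1611, 1, 128, 898⟩,
  ⟨1307, 1499, 11, 1847, 1, 128, 915⟩,
  ⟨1511, 1721, 11, 2119, 1, 128, 933⟩,
  ⟨1723, 1987, 11, 2429, 1, 128, 950⟩,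
  ⟨1993, 2267, 12, 2776, 1, 128, 967⟩,
  ⟨2269, 2593, 12, 3174, 1, 128, 985⟩,
  ⟨2609, 2927, 12, 3646, 1, 128, 1002⟩,
  ⟨2939, 3361, 12, 4161, 1, 128, 1019⟩,
  ⟨3371, 3823, 12, 4754, 1, 128, 1036⟩,
  ⟨3833, 4357, 13, 5427, 1, 128, 1053⟩,
  ⟨4363, 4987, 13, 6195, 1, 128, 1070⟩,
  ⟨4993, 5683, 13, 7073, 1, 128, 1087⟩,
  ⟨5689, 6451, 13, 8076, 1, 128, 1104⟩,
  ⟨6469, 7411, 13, 9208, 1, 128, 1121⟩,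
  ⟨7417, 8231, 14, 10509, 1, 128, 1138⟩]

lemma steps_ok : chkC 8231 ⟨7, 7, 3, 154, 20, 256, 428⟩ steps = true := by decide +kernel

lemma last_ok : (segQ (fun _ => 2) 14 8233 ≤ 2 * segQ (fun _ => 2) 14 8231) ∧
    2^11699 ≤ (segQ id 14 8233)^1 ∧
    (2*512^3+2*512^2+512+2)^4608 * (1 * 1000000) ≤ 11699 * 693147 * (2*512^3)^4608 := by
  refine ⟨?_, ?_, ?_⟩ <;> decide +kernel

end

open Finset

lemma card_step (d Q R : ℕ) (hd : d ≤ 14) (hQ : Q < 2^d) (hR : R < 2^d)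
    (h : segQ (fun _ => 2) d Q ≤ 2 * segQ (fun _ => 2) d R) : (TT Q).card ≤ (TT R).card + 1 := by
  rw [segQ_eq _ _ _ hd hQ, segQ_eq _ _ _ hd hR, prod_const, prod_const, ← pow_succ'] at h
  exact (Nat.pow_le_pow_iff_right (by norm_num)).mp h

lemma last_step (k d Q R a s q j : ℕ) (hk : 1 ≤ k) (hd : d ≤ 14) (hQ : Q < 2^d) (hQ1 : 1 ≤ Q)
    (hs : 1 ≤ s) (hq : 1 ≤ q)
    (hc1 : (TT Q).card ≤ (TT R).card + 1) (hc2 : (TT R).card < k.primeFactors.card) (h1 : 2^a ≤ (segQ id d Q)^s)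
    (h2 : (2*q^3+2*q^2+q+2)^j * (s * 1000000) ≤ a * 693147 * (2*q^3)^j) :
    (j:ℝ)/q ≤ Real.log (Real.log k) := by
  rw [segQ_eq _ _ _ hd hQ] at h1
  exact loglog_ge k _ a s q j hs hq (k_ge k Q hk hQ1 (by omega)) h1 h2

lemma small_omega (k : ℕ) (hk : 3 ≤ k) (h : k.primeFactors.card ≤ 3) :
    (k / (Nat.totient k : ℝ)) ≤ 1.7811 * Real.log (Real.log k) + 2.51 / Real.log (Real.log k) := by
  have hT : TT 5 = {2, 3, 5} := by
    ext p
    rw [mem_TT]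
    simp only [mem_insert, mem_singleton]
    constructor
    · rintro ⟨h1, h2⟩
      interval_cases p <;> simp_all <;> revert h2 <;> norm_num
    · rintro (rfl | rfl | rfl) <;> norm_num
  have h1 := ratio_le k 5 (by omega) (by norm_num) (by rw [hT]; exact h)
  rw [hT] at h1
  norm_num at h1
  refine h1.trans ?_
  have hL : 0 < Real.log (Real.log k) := by
    apply Real.log_pos
    rw [Real.lt_log_iff_exp_lt (by positivity)]
    have := Real.exp_one_lt_d9
    have : (3:ℝ) ≤ k := by exact_mod_cast hk
    linarith
  obtain ⟨L, hLd⟩ : ∃ L, L = Real.log (Real.log k) := ⟨_, rfl⟩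
  rw [← hLd] at hL ⊢
  have e : 1.7811 * L + 2.51 / L = (1.7811 * L^2 + 2.51) / L := by field_simp
  rw [e, le_div_iff₀ hL]
  nlinarith [sq_nonneg (L - 1.1)]

lemma main_bound (k : ℕ) (hk : 3 ≤ k) :
    (k / (Nat.totient k : ℝ)) ≤ 1.7811 * Real.log (Real.log k) + 2.51 / Real.log (Real.log k) := by
  rcases Nat.lt_or_ge 3 k.primeFactors.card with h | h
  · have hc : (TT 7).card ≤ k.primeFactors.card := by
      have hT : TT 7 ⊆ {2, 3, 5, 7} := by
        intro p hp
        rw [mem_TT] at hp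
        obtain ⟨h1, h2⟩ := hp
        interval_cases p <;> simp_all <;> revert h2 <;> norm_num
      have := card_le_card hT
      have e : ({2, 3, 5, 7} : Finset ℕ).card = 4 := by decide
      omega
    rcases chkC_sound 8231 k (by omega) steps _ steps_ok hc with h1 | h1
    · exact h1
    · have hk1 : 1 ≤ k := by omega
      have h2 := card_step 14 8233 8231 (by norm_num) (by norm_num) (by norm_num) last_ok.1
      have h4 := last_step k 14 8233 8231 _ 1 512 4608 hk1 (by norm_num) (by norm_num) (by norm_num)
        (by norm_num) (by norm_num) h2 h1 last_ok.2.1 last_ok.2.2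
      apply large_final k hk1
      norm_num at h4
      linarith
  · exact small_omega k hk h

theorem totient_lower_bound (k : ℕ) (hk : 3 ≤ k) :
    (Nat.totient k : ℝ) ≥
      k / (1.7811 * Real.log (Real.log k) + 2.51 / Real.log (Real.log k)) := by
  have h := main_bound k hk
  have hφ : (0:ℝ) < Nat.totient k := by exact_mod_cast Nat.totient_pos.mpr (by omega)
  have hk0 : (0:ℝ) < k := by positivity
  have hf : 0 < 1.7811 * Real.log (Real.log k) + 2.51 / Real.log (Real.log k) :=
    lt_of_lt_of_le (by positivity) h
  rw [ge_iff_le, div_le_iff₀ hf]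
  rw [div_le_iff₀ hφ] at h
  linarith
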